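/- For any f ∈ Ḣ¹_⋄, T > 0, ν > 0 and B > 0, there exists a constant C = C(ν, T, ‖f‖_{Ḣ¹}, B) > 0 such that for all θ, θ₀ ∈ Ḣ²_⋄ with ‖θ‖_{Ḣ²} + ‖θ₀‖_{Ḣ²} ≤ B, the corresponding solutions u_θ, u_{θ₀} of the periodic 2D Navier–Stokes equations satisfy the stability (inverse-continuity) estimate ‖θ − θ₀‖²_{Ḣ^{−1}} ≤ C ∫₀ᵀ ‖u_θ(t) − u_{θ₀}(t)‖²_{L²} dt. -/

import Mathlib

open MeasureTheory Set
open scoped BigOperators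

noncomputable section

namespace NS2D

/-- Nonzero Fourier frequencies of the 2D torus `Ω = 𝕋²`. -/
def Freq : Type := {k : ℤ × ℤ // k ≠ 0}

/-- Squared Euclidean modulus `|k|²` of a frequency. -/
def knormSq (k : Freq) : ℝ := (k.1.1 : ℝ) ^ 2 + (k.1.2 : ℝ) ^ 2

/-- Eigenvalue `λ_k = 4π²|k|²` of the periodic Laplacian `−Δ`. -/
def lam (k : Freq) : ℝ := 4 * Real.pi ^ 2 * knormSq k

/-- A divergence-free mean-zero vector field `u ∈ Ḣ_⋄` (or, more generally, an
element of the scale `Ḣ^α_⋄`) on the torus is represented by its Fourier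
coefficients `c k` along the orthonormal basis
`e_k(x) = |k|⁻¹ (k₂, −k₁) exp(2πi k·x)` of divergence-free fields. -/
abbrev Coef : Type := Freq → ℂ

/-- Negation of a frequency. -/
def fneg (k : Freq) : Freq := ⟨-k.1, neg_ne_zero.mpr k.2⟩

/-- The conjugacy condition expressing that the coefficients `c` represent a
real-valued vector field (note `e_{−k} = − conj e_k`). -/
def IsReal (c : Coef) : Prop := ∀ k, c (fneg k) = - (starRingEnd ℂ) (c k)

/-- Squared homogeneous Sobolev norm `‖·‖²_{Ḣ^α} = Σ_k λ_k^α |c k|²`. -/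
def hSq (α : ℝ) (c : Coef) : ℝ := ∑' k, lam k ^ α * ‖c k‖ ^ 2

/-- Homogeneous Sobolev norm `‖·‖_{Ḣ^α}`. -/
def hN (α : ℝ) (c : Coef) : ℝ := Real.sqrt (hSq α c)

/-- Finiteness of the `Ḣ^α`-norm. -/
def FinH (α : ℝ) (c : Coef) : Prop := Summable fun k => lam k ^ α * ‖c k‖ ^ 2

/-- Membership in `Ḣ^α_⋄` (real-valued field with finite `Ḣ^α`-norm). -/
def MemH (α : ℝ) (c : Coef) : Prop := IsReal c ∧ FinH α c

/-- Membership in `Ḣ^∞_⋄ = C^∞(Ω)² ∩ Ḣ_⋄`: all Sobolev norms are finite. -/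
def MemHinf (c : Coef) : Prop := ∀ α : ℝ, MemH α c

/-- Real `Ḣ^α` inner product `⟨·,·⟩_{Ḣ^α}` (for real-valued fields). -/
def hInner (α : ℝ) (c d : Coef) : ℝ := ∑' k, lam k ^ α * (c k * (starRingEnd ℂ) (d k)).re

/-- The `L²` inner product. -/
def innerC (c d : Coef) : ℂ := ∑' k, c k * (starRingEnd ℂ) (d k)

/-- The unit vector `(k₂, −k₁)/|k|` spanning the divergence-free direction at
frequency `k`. -/
def evec (k : Freq) : ℝ × ℝ :=
  ((k.1.2 : ℝ) / Real.sqrt (knormSq k), -((k.1.1 : ℝ)) / Real.sqrt (knormSq k))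

/-- Euclidean dot product on `ℝ²`. -/
def dotR (a b : ℝ × ℝ) : ℝ := a.1 * b.1 + a.2 * b.2

/-- A frequency as a real vector. -/
def fvec (k : Freq) : ℝ × ℝ := ((k.1.1 : ℝ), (k.1.2 : ℝ))

/-- Fourier coefficients (along the basis `e_k`) of the Leray-projected
transport nonlinearity `B[u,v] = P[(u·∇)v]`:
`(B[u,v])^(k) · ē_k = 2πi Σ_{m+n=k, n≠0} c_m d_n (e_m·n)(e_n·e_k)`. -/
def Bc (c d : Coef) : Coef := fun k =>
  (((2 * Real.pi : ℝ) : ℂ) * Complex.I) *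
    ∑' m : Freq,
      if h : k.1 - m.1 ≠ 0 then
        c m * d ⟨k.1 - m.1, h⟩ *
          (((dotR (evec m) (fvec ⟨k.1 - m.1, h⟩) *
            dotR (evec ⟨k.1 - m.1, h⟩) (evec k) : ℝ)) : ℂ)
      else 0

/-- The Laplacian `Δ` acting on the scale: `(Δu)^(k) = −λ_k û(k)`. -/
def lapC (c : Coef) : Coef := fun k => -((lam k : ℝ) : ℂ) * c k

/-- Continuity of a trajectory `t ↦ u(t)`, `t ∈ [0,T]`, for the `Ḣ^α`-norm:
`u ∈ C([0,T], Ḣ^α_⋄)`. -/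
def ContH (α : ℝ) (T : ℝ) (u : ℝ → Coef) : Prop :=
  ∀ t ∈ Icc (0:ℝ) T, ∀ ε > 0, ∃ δ > 0, ∀ s ∈ Icc (0:ℝ) T,
    |s - t| < δ → hN α (u s - u t) < ε

/-- Membership `u ∈ L²([0,T], Ḣ^α_⋄)`. -/
def MemL2H (α : ℝ) (T : ℝ) (u : ℝ → Coef) : Prop :=
  (∀ t ∈ Ioc (0:ℝ) T, MemH α (u t)) ∧
    IntegrableOn (fun t => hSq α (u t)) (Ioc 0 T)

/-- `u` is a strong solution on `[0,T]` of the (Leray-projected) periodic 2D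
Navier–Stokes equations `du/dt + νAu + B[u,u] = f`, `u(0) = θ`, posed in `Ḣ_⋄`:
the Fourier coefficients satisfy the corresponding system of ODEs on `(0,T]`,
the trajectory is continuous into `Ḣ¹_⋄` (in particular at `t = 0`), and lies
in `L²([0,T], Ḣ²_⋄)`. -/
structure IsNSSol (ν : ℝ) (f : Coef) (T : ℝ) (θ : Coef) (u : ℝ → Coef) : Prop where
  init : u 0 = θ
  real : ∀ t ∈ Icc (0:ℝ) T, IsReal (u t)
  deriv : ∀ (k : Freq), ∀ t ∈ Ioc (0:ℝ) T,
    HasDerivAt (fun s => u s k)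
      (f k - ((ν * lam k : ℝ) : ℂ) * u t k - Bc (u t) (u t) k) t
  contH1 : ContH 1 T u
  memL2H2 : MemL2H 2 T u

/-- `U` solves the linear parabolic equation
`dU/dt − νΔU + B[u₀, U] + B[U, u₁] = g`, `U(0) = ξ`, on `[0,T]`. -/
structure IsLinPSol (ν : ℝ) (u₀ u₁ : ℝ → Coef) (g : ℝ → Coef) (T : ℝ) (ξ : Coef)
    (U : ℝ → Coef) : Prop where
  init : U 0 = ξ
  real : ∀ t ∈ Icc (0:ℝ) T, IsReal (U t)
  deriv : ∀ (k : Freq), ∀ t ∈ Ioc (0:ℝ) T,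
    HasDerivAt (fun s => U s k)
      (g t k - ((ν * lam k : ℝ) : ℂ) * U t k - Bc (u₀ t) (U t) k - Bc (U t) (u₁ t) k) t

/-- `U = 𝕀_θ[ξ]` solves the linearisation of Navier–Stokes along the
trajectory `u₀`: `dU/dt − νΔU + B[u₀,U] + B[U,u₀] = 0`, `U(0) = ξ`. -/
def IsLinSol (ν : ℝ) (u₀ : ℝ → Coef) (T : ℝ) (ξ : Coef) (U : ℝ → Coef) : Prop :=
  IsLinPSol ν u₀ u₀ (fun _ => 0) T ξ U

/-- The heat semigroup `S_t = e^{νtΔ}` on the scale `Ḣ^α_⋄`. -/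
def heatS (ν t : ℝ) (c : Coef) : Coef := fun k =>
  ((Real.exp (-(ν * lam k * t)) : ℝ) : ℂ) * c k

/-- Duhamel representation of the solution of the periodic heat equation
`du/dt − νΔu = g`, `u(0) = h`. -/
def heatSol (ν : ℝ) (g : ℝ → Coef) (h : Coef) : ℝ → Coef := fun t k =>
  ((Real.exp (-(ν * lam k * t)) : ℝ) : ℂ) *
    (h k + ∫ s in (0:ℝ)..t, ((Real.exp (ν * lam k * s) : ℝ) : ℂ) * g s k)

/-- Real-linearity of a map on the coefficient space. -/
def IsLinMap (Λ : Coef → Coef) : Prop :=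
  (∀ c d, Λ (c + d) = Λ c + Λ d) ∧ ∀ (r : ℝ) (c : Coef), Λ (r • c) = r • Λ c

/-- `Λ` defines a compact (linear) operator `Ḣ^α_⋄ → Ḣ^β_⋄`: it is linear,
maps `Ḣ^α_⋄` into `Ḣ^β_⋄`, and the image of the `Ḣ^α`-unit ball is totally
bounded for the `Ḣ^β`-norm. -/
def IsCompactOp (α β : ℝ) (Λ : Coef → Coef) : Prop :=
  IsLinMap Λ ∧ (∀ c, MemH α c → MemH β (Λ c)) ∧
    ∀ ε > 0, ∃ S : Finset Coef, ∀ c, MemH α c → hN α c ≤ 1 →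
      ∃ s ∈ S, hN β (Λ c - s) < ε

/-- The index `a* = |a|+1` if `|a| ≤ 1`, `a* = |a|` if `|a| ≥ 2`. -/
def astar (a : ℤ) : ℤ := if |a| ≤ 1 then |a| + 1 else |a|

/-- `i`-th component of the unit vector `evec k`. -/
def evecC (i : Fin 2) (k : Freq) : ℝ := if i = 0 then (evec k).1 else (evec k).2

/-- Fourier coefficients (over all of `ℤ²`) of the scalar component `u_i` of a
divergence-free field with coefficients `c`. -/
def compCoef (i : Fin 2) (c : Coef) : ℤ × ℤ → ℂ := fun n =>
  if h : n ≠ 0 then c ⟨n, h⟩ * ((evecC i ⟨n, h⟩ : ℝ) : ℂ) else 0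

/-- Convolution: Fourier coefficients of a pointwise product of two scalar
functions. -/
def convC (F G : ℤ × ℤ → ℂ) : ℤ × ℤ → ℂ := fun n => ∑' m : ℤ × ℤ, F m * G (n - m)

/-- Squared homogeneous Sobolev norm of a scalar function given by its Fourier
coefficients over `ℤ²`. -/
def hSqScalar (α : ℝ) (F : ℤ × ℤ → ℂ) : ℝ := ∑' k : Freq, lam k ^ α * ‖F k.1‖ ^ 2

/-- `‖u vᵀ‖²_{Ḣ^α} = Σ_{i,j=1}^2 ‖u_i v_j‖²_{Ḣ^α}`. -/
def hSqMat (α : ℝ) (c d : Coef) : ℝ :=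
  ∑ i : Fin 2, ∑ j : Fin 2, hSqScalar α (convC (compCoef i c) (compCoef j d))

/-- The character `exp(2πi k·x)`. -/
def efun (k : Freq) (x : ℝ × ℝ) : ℂ :=
  Complex.exp ((((2 * Real.pi : ℝ)) : ℂ) * Complex.I *
    ((k.1.1 : ℂ) * (x.1 : ℂ) + (k.1.2 : ℂ) * (x.2 : ℂ)))

/-- Pointwise evaluation of the `i`-th component of the field. -/
def evalComp (i : Fin 2) (c : Coef) (x : ℝ × ℝ) : ℂ :=
  ∑' k, c k * ((evecC i k : ℝ) : ℂ) * efun k x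

/-- Supremum norm (`C⁰`-norm) of the field. -/
def c0N (c : Coef) : ℝ := ⨆ x : ℝ × ℝ, max ‖evalComp 0 c x‖ ‖evalComp 1 c x‖

/-- The partial derivative `∂_j` acting on divergence-free fields. -/
def pderiv (j : Fin 2) (c : Coef) : Coef := fun k =>
  (((2 * Real.pi : ℝ) : ℂ) * Complex.I) *
    (if j = 0 then ((k.1.1 : ℤ) : ℂ) else ((k.1.2 : ℤ) : ℂ)) * c k

/-- `C¹`-norm of the field. -/
def c1N (c : Coef) : ℝ := c0N c + c0N (pderiv 0 c) + c0N (pderiv 1 c)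

/-- Norm of the multiplier space `B^ℓ`: `C^ℓ(Ω)²` for `ℓ ≤ 1` and `Ḣ^ℓ` for
`ℓ ≥ 2`. -/
def bN (ℓ : ℕ) (c : Coef) : ℝ :=
  if ℓ = 0 then c0N c else if ℓ = 1 then c1N c else hN (ℓ : ℝ) c

end NS2D

namespace NS2D

/-! ### Trilinear convolution estimate -/

/-- Cauchy-Schwarz for series. -/
lemma cs_tsum {ι : Type*} {y z : ι → ℝ} (hy : ∀ i, 0 ≤ y i) (hz : ∀ i, 0 ≤ z i)
    (sy : Summable fun i => y i ^ 2) (sz : Summable fun i => z i ^ 2) :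
    (Summable fun i => y i * z i) ∧
      ∑' i, y i * z i ≤ Real.sqrt (∑' i, y i ^ 2) * Real.sqrt (∑' i, z i ^ 2) := by
  have h := Real.summable_and_inner_le_Lp_mul_Lq_tsum_of_nonneg
    (Real.HolderConjugate.two_two) hy hz (by simpa using sy) (by simpa using sz)
  refine ⟨h.1, ?_⟩
  have h2 := h.2
  simp only [Real.rpow_two] at h2
  rwa [← Real.sqrt_eq_rpow, ← Real.sqrt_eq_rpow] at h2

lemma shift_sq {G : Type*} [AddCommGroup G] {z : G → ℝ} (sz : Summable fun i => z i ^ 2) (m : G) :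
    (Summable fun n => z (m + n) ^ 2) ∧ ∑' n, z (m + n) ^ 2 = ∑' n, z n ^ 2 :=
  ⟨sz.comp_injective (i := fun n => m + n) (add_right_injective m),
    (Equiv.addLeft m).tsum_eq (fun n => z n ^ 2)⟩

lemma prod_bound {α β : Type*} {x : α → ℝ} {g : α → β → ℝ} (hx : ∀ i, 0 ≤ x i)
    (hg : ∀ i j, 0 ≤ g i j) (sx : Summable x) (M : ℝ)
    (key : ∀ m, Summable (g m) ∧ ∑' n, g m n ≤ M) :
    (Summable fun p : α × β => x p.1 * g p.1 p.2) ∧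
      ∑' p : α × β, x p.1 * g p.1 p.2 ≤ (∑' i, x i) * M := by
  have h1 : ∀ m, Summable fun n => x m * g m n := fun m => (key m).1.mul_left (x m)
  have h2 : ∀ m, ∑' n, x m * g m n ≤ x m * M := fun m => by
    rw [tsum_mul_left]
    exact mul_le_mul_of_nonneg_left (key m).2 (hx m)
  have h3 : ∀ m n, 0 ≤ x m * g m n := fun m n => mul_nonneg (hx m) (hg m n)
  have h4 : Summable fun m => ∑' n, x m * g m n :=
    Summable.of_nonneg_of_le (fun m => tsum_nonneg (h3 m)) h2 (sx.mul_right M)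
  have hs : Summable fun p : α × β => x p.1 * g p.1 p.2 :=
    (summable_prod_of_nonneg (fun p => h3 p.1 p.2)).mpr ⟨h1, h4⟩
  refine ⟨hs, ?_⟩
  rw [hs.tsum_prod, ← tsum_mul_right]
  exact Summable.tsum_le_tsum h2 h4 (sx.mul_right M)

lemma trilin {G : Type*} [AddCommGroup G] {x y z : G → ℝ} (hx : ∀ i, 0 ≤ x i)
    (hy : ∀ i, 0 ≤ y i) (hz : ∀ i, 0 ≤ z i) (sx : Summable x)
    (sy : Summable fun i => y i ^ 2) (sz : Summable fun i => z i ^ 2) :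
    (Summable fun p : G × G => x p.1 * (y p.2 * z (p.1 + p.2))) ∧
      ∑' p : G × G, x p.1 * (y p.2 * z (p.1 + p.2)) ≤
        (∑' i, x i) * (Real.sqrt (∑' i, y i ^ 2) * Real.sqrt (∑' i, z i ^ 2)) := by
  refine prod_bound (g := fun m n => y n * z (m + n)) hx
    (fun m n => mul_nonneg (hy _) (hz _)) sx _ (fun m => ?_)
  have h := cs_tsum hy (fun n => hz (m + n)) sy (shift_sq sz m).1
  rw [(shift_sq sz m).2] at h
  exact h

/-! ### Frequencies and eigenvalues -/

instance : Countable Freq := by unfold Freq; infer_instance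

lemma knormSq_ge_one (k : Freq) : 1 ≤ knormSq k := by
  obtain ⟨⟨a, b⟩, hk⟩ := k
  have : (1 : ℤ) ≤ a ^ 2 + b ^ 2 := by
    by_contra h
    have h1 : a ^ 2 + b ^ 2 ≤ 0 := by omega
    have ha : a = 0 := by nlinarith [sq_nonneg a, sq_nonneg b]
    have hb : b = 0 := by nlinarith [sq_nonneg a, sq_nonneg b]
    exact hk (by simp [ha, hb])
  unfold knormSq
  exact_mod_cast this

lemma knormSq_le_lam (k : Freq) : knormSq k ≤ lam k := by
  have h1 := knormSq_ge_one k
  have hp := Real.pi_gt_three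
  have h2 : 1 ≤ 4 * Real.pi ^ 2 := by nlinarith
  unfold lam
  exact le_mul_of_one_le_left (by linarith) h2

lemma one_le_lam (k : Freq) : 1 ≤ lam k := (knormSq_ge_one k).trans (knormSq_le_lam k)

lemma lam_pos (k : Freq) : 0 < lam k := lt_of_lt_of_le one_pos (one_le_lam k)

lemma summable_int_sq : Summable fun n : ℤ => 1 / (1 + (n : ℝ) ^ 2) := by
  have h : Summable fun n : ℤ => 1 / (n : ℝ) ^ 2 := Real.summable_one_div_int_pow.mpr one_lt_two
  have h0 : Summable fun n : ℤ => (if n = 0 then (1 : ℝ) else 0) :=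
    summable_of_ne_finset_zero (s := {0}) (by intro b hb; simp at hb; simp [hb])
  refine Summable.of_nonneg_of_le (fun n => by positivity) (fun n => ?_) (h.add h0)
  by_cases hn : n = 0
  · simp [hn]
  · have : (0 : ℝ) < (n : ℝ) ^ 2 := by positivity
    simp only [hn, if_false, add_zero]
    exact one_div_le_one_div_of_le this (by linarith)

lemma summable_lam : Summable fun k : Freq => (lam k)⁻¹ ^ 2 := by
  have h : Summable fun p : ℤ × ℤ => (1 / (1 + (p.1 : ℝ) ^ 2)) * (1 / (1 + (p.2 : ℝ) ^ 2)) :=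
    summable_int_sq.mul_of_nonneg summable_int_sq (fun n => by positivity) (fun n => by positivity)
  have h' : Summable fun k : Freq =>
      4 * ((1 / (1 + (k.1.1 : ℝ) ^ 2)) * (1 / (1 + (k.1.2 : ℝ) ^ 2))) :=
    (h.comp_injective (i := fun k : Freq => k.1) Subtype.val_injective).mul_left 4
  refine Summable.of_nonneg_of_le (fun n => by positivity) (fun k => ?_) h'
  have h1 := knormSq_ge_one k
  have h2 := knormSq_le_lam k
  have h3 : (lam k)⁻¹ ^ 2 ≤ (knormSq k)⁻¹ ^ 2 := by
    have := (lam_pos k).le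
    gcongr
  refine h3.trans ?_
  have ha : 1 + (k.1.1 : ℝ) ^ 2 ≤ 2 * knormSq k := by
    have := sq_nonneg (k.1.2 : ℝ); unfold knormSq at *; linarith
  have hb : 1 + (k.1.2 : ℝ) ^ 2 ≤ 2 * knormSq k := by
    have := sq_nonneg (k.1.1 : ℝ); unfold knormSq at *; linarith
  have hab : (1 + (k.1.1 : ℝ) ^ 2) * (1 + (k.1.2 : ℝ) ^ 2) ≤ (2 * knormSq k) * (2 * knormSq k) := by
    gcongr
  have : (knormSq k)⁻¹ ^ 2 = 4 * (1 / ((2 * knormSq k) * (2 * knormSq k))) := by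
    field_simp; ring
  rw [this, one_div_mul_one_div]
  gcongr

/-- The constant of the embedding of `Ḣ²` into absolutely convergent Fourier series. -/
def KK : ℝ := ∑' k : Freq, (lam k)⁻¹ ^ 2

lemma KK_nonneg : 0 ≤ KK := tsum_nonneg fun _ => by positivity

/-! ### Sobolev norms -/

lemma hSq_nonneg (α : ℝ) (c : Coef) : 0 ≤ hSq α c :=
  tsum_nonneg fun k => mul_nonneg (Real.rpow_nonneg (lam_pos k).le _) (sq_nonneg _)

lemma hN_sq (α : ℝ) (c : Coef) : hN α c ^ 2 = hSq α c := Real.sq_sqrt (hSq_nonneg α c)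

lemma term_mono {α β : ℝ} (h : α ≤ β) (c : Coef) (k : Freq) :
    lam k ^ α * ‖c k‖ ^ 2 ≤ lam k ^ β * ‖c k‖ ^ 2 :=
  mul_le_mul_of_nonneg_right (Real.rpow_le_rpow_of_exponent_le (one_le_lam k) h) (sq_nonneg _)

lemma term_nonneg (α : ℝ) (c : Coef) (k : Freq) : 0 ≤ lam k ^ α * ‖c k‖ ^ 2 :=
  mul_nonneg (Real.rpow_nonneg (lam_pos k).le _) (sq_nonneg _)

lemma FinH.mono {α β : ℝ} (h : α ≤ β) {c : Coef} (hc : FinH β c) : FinH α c :=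
  Summable.of_nonneg_of_le (term_nonneg α c) (term_mono h c) hc

lemma hSq_mono {α β : ℝ} (h : α ≤ β) {c : Coef} (hc : FinH β c) : hSq α c ≤ hSq β c :=
  Summable.tsum_le_tsum (term_mono h c) (hc.mono h) hc

lemma term_sub_le (α : ℝ) (c d : Coef) (k : Freq) :
    lam k ^ α * ‖(c - d) k‖ ^ 2 ≤ 2 * (lam k ^ α * ‖c k‖ ^ 2) + 2 * (lam k ^ α * ‖d k‖ ^ 2) := by
  have h : ‖(c - d) k‖ ^ 2 ≤ 2 * ‖c k‖ ^ 2 + 2 * ‖d k‖ ^ 2 := by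
    have h1 : ‖(c - d) k‖ ≤ ‖c k‖ + ‖d k‖ := norm_sub_le _ _
    nlinarith [norm_nonneg ((c - d) k), sq_nonneg (‖c k‖ - ‖d k‖)]
  have := mul_le_mul_of_nonneg_left h (Real.rpow_nonneg (lam_pos k).le α)
  linarith

lemma FinH.sub {α : ℝ} {c d : Coef} (hc : FinH α c) (hd : FinH α d) : FinH α (c - d) :=
  Summable.of_nonneg_of_le (term_nonneg α _) (term_sub_le α c d)
    ((hc.mul_left 2).add (hd.mul_left 2))

lemma hSq_sub_le {α : ℝ} {c d : Coef} (hc : FinH α c) (hd : FinH α d) :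
    hSq α (c - d) ≤ 2 * hSq α c + 2 * hSq α d := by
  unfold hSq
  rw [← tsum_mul_left, ← tsum_mul_left, ← (hc.mul_left 2).tsum_add (hd.mul_left 2)]
  exact Summable.tsum_le_tsum (term_sub_le α c d) (hc.sub hd) ((hc.mul_left 2).add (hd.mul_left 2))

/-- `ℓ¹` norm of the coefficients. -/
def l1 (c : Coef) : ℝ := ∑' k, ‖c k‖

lemma l1_nonneg (c : Coef) : 0 ≤ l1 c := tsum_nonneg fun _ => norm_nonneg _

lemma l1_bound {c : Coef} (hc : FinH 2 c) :
    (Summable fun k => ‖c k‖) ∧ l1 c ^ 2 ≤ KK * hSq 2 c := by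
  have e : ∀ k : Freq, (lam k)⁻¹ * (lam k * ‖c k‖) = ‖c k‖ := fun k => by
    have := (lam_pos k).ne'
    field_simp
  have e2 : ∀ k : Freq, (lam k * ‖c k‖) ^ 2 = lam k ^ (2 : ℝ) * ‖c k‖ ^ 2 := fun k => by
    rw [mul_pow, Real.rpow_two]
  have h := cs_tsum (y := fun k : Freq => (lam k)⁻¹) (z := fun k => lam k * ‖c k‖)
    (fun k => (inv_pos.mpr (lam_pos k)).le) (fun k => mul_nonneg (lam_pos k).le (norm_nonneg _))
    summable_lam (by simp only [e2]; exact hc)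
  simp only [e, e2] at h
  refine ⟨h.1, ?_⟩
  have h2 := pow_le_pow_left₀ (l1_nonneg c) h.2 2
  rw [mul_pow] at h2
  refine h2.trans_eq ?_
  change Real.sqrt KK ^ 2 * Real.sqrt (hSq 2 c) ^ 2 = _
  rw [Real.sq_sqrt KK_nonneg, Real.sq_sqrt (hSq_nonneg 2 c)]

/-! ### Extension of coefficients to all of `ℤ²` -/

/-- Extension by zero. -/
def ext {M : Type*} [Zero M] (φ : Freq → M) (k : ℤ × ℤ) : M := if h : k ≠ 0 then φ ⟨k, h⟩ else 0

@[simp] lemma ext_zero {M : Type*} [Zero M] (φ : Freq → M) : ext φ 0 = 0 := by simp [ext]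

@[simp] lemma ext_val {M : Type*} [Zero M] (φ : Freq → M) (k : Freq) : ext φ k.1 = φ k := by
  have := k.2
  simp only [ext]
  rw [dif_pos this]
  rfl

lemma ext_cases {P : ℤ × ℤ → Prop} (h0 : P 0) (h1 : ∀ k : Freq, P k.1) (k : ℤ × ℤ) : P k := by
  by_cases h : k = 0
  · rw [h]; exact h0
  · exact h1 ⟨k, h⟩

lemma norm_ext (c : Coef) (k : ℤ × ℤ) : ‖ext c k‖ = ext (fun k => ‖c k‖) k := by
  induction k using ext_cases with
  | h0 => simp
  | h1 k => simp

lemma ext_sq (φ : Freq → ℝ) (k : ℤ × ℤ) : ext φ k ^ 2 = ext (fun k => φ k ^ 2) k := by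
  induction k using ext_cases with
  | h0 => simp
  | h1 k => simp

lemma ext_nonneg {φ : Freq → ℝ} (h : ∀ k, 0 ≤ φ k) (k : ℤ × ℤ) : 0 ≤ ext φ k := by
  induction k using ext_cases with
  | h0 => simp
  | h1 k => simpa using h k

lemma not_mem_range_val {k : ℤ × ℤ} (h : k ∉ Set.range (fun k : Freq => k.1)) : k = 0 := by
  by_contra h0
  exact h ⟨⟨k, h0⟩, rfl⟩

lemma freq_inj : Function.Injective (fun k : Freq => k.1) := Subtype.val_injective

lemma hasSum_freq {M : Type*} [AddCommMonoid M] [TopologicalSpace M] {Φ : ℤ × ℤ → M}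
    (h0 : Φ 0 = 0) {a : M} : HasSum (fun k : Freq => Φ k.1) a ↔ HasSum Φ a :=
  freq_inj.hasSum_iff (fun x hx => by rw [not_mem_range_val hx, h0])

lemma summable_freq {M : Type*} [AddCommMonoid M] [TopologicalSpace M] {Φ : ℤ × ℤ → M}
    (h0 : Φ 0 = 0) : Summable (fun k : Freq => Φ k.1) ↔ Summable Φ :=
  freq_inj.summable_iff (fun x hx => by rw [not_mem_range_val hx, h0])

lemma tsum_freq {M : Type*} [AddCommMonoid M] [TopologicalSpace M] {Φ : ℤ × ℤ → M}
    (h0 : Φ 0 = 0) : ∑' k : Freq, Φ k.1 = ∑' k, Φ k :=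
  freq_inj.tsum_eq (fun x hx => by
    by_contra h
    exact hx (by rw [not_mem_range_val h, h0]))

lemma summable_ext {φ : Freq → ℝ} : Summable (ext φ) ↔ Summable φ := by
  rw [← summable_freq (ext_zero φ)]
  simp only [ext_val]

lemma tsum_ext (φ : Freq → ℝ) : ∑' k, ext φ k = ∑' k, φ k := by
  rw [← tsum_freq (ext_zero φ)]
  simp only [ext_val]

/-! ### The symbol of the nonlinearity -/

/-- Euclidean modulus. -/
def nr (k : ℤ × ℤ) : ℝ := Real.sqrt ((k.1 : ℝ) ^ 2 + (k.2 : ℝ) ^ 2)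

lemma nr_nonneg (k : ℤ × ℤ) : 0 ≤ nr k := Real.sqrt_nonneg _

lemma nr_sq (k : ℤ × ℤ) : nr k ^ 2 = (k.1 : ℝ) ^ 2 + (k.2 : ℝ) ^ 2 :=
  Real.sq_sqrt (by positivity)

lemma nr_pos (k : Freq) : 0 < nr k.1 :=
  Real.sqrt_pos.mpr (lt_of_lt_of_le one_pos (knormSq_ge_one k))

lemma lam_eq (k : Freq) : lam k = (2 * Real.pi * nr k.1) ^ 2 := by
  rw [mul_pow, nr_sq]; unfold lam knormSq; ring

lemma sqrt_lam (k : Freq) : Real.sqrt (lam k) = 2 * Real.pi * nr k.1 := by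
  rw [lam_eq, Real.sqrt_sq]
  have := Real.pi_pos
  have := nr_nonneg k.1
  positivity

/-- Symbol of the transport term. -/
def q (m n k : ℤ × ℤ) : ℝ :=
  (((m.2 : ℝ) * n.1 - m.1 * n.2) / nr m) * (((n.1 : ℝ) * k.1 + n.2 * k.2) / (nr n * nr k))

lemma cross_le (m n : ℤ × ℤ) : |(m.2 : ℝ) * n.1 - m.1 * n.2| ≤ nr m * nr n := by
  apply abs_le_of_sq_le_sq _ (mul_nonneg (nr_nonneg _) (nr_nonneg _))
  rw [mul_pow, nr_sq, nr_sq]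
  nlinarith [sq_nonneg ((m.1 : ℝ) * n.1 + m.2 * n.2)]

lemma dot_le (m n : ℤ × ℤ) : |(m.1 : ℝ) * n.1 + m.2 * n.2| ≤ nr m * nr n := by
  apply abs_le_of_sq_le_sq _ (mul_nonneg (nr_nonneg _) (nr_nonneg _))
  rw [mul_pow, nr_sq, nr_sq]
  nlinarith [sq_nonneg ((m.1 : ℝ) * n.2 - m.2 * n.1)]

lemma q_second (n k : ℤ × ℤ) : |((n.1 : ℝ) * k.1 + n.2 * k.2) / (nr n * nr k)| ≤ 1 := by
  rw [abs_div, abs_of_nonneg (mul_nonneg (nr_nonneg n) (nr_nonneg k))]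
  exact div_le_one_of_le₀ (dot_le n k) (mul_nonneg (nr_nonneg n) (nr_nonneg k))

lemma q_first (m n : ℤ × ℤ) : |((m.2 : ℝ) * n.1 - m.1 * n.2) / nr m| ≤ nr n := by
  rw [abs_div, abs_of_nonneg (nr_nonneg m)]
  exact div_le_of_le_mul₀ (nr_nonneg m) (nr_nonneg n) ((cross_le m n).trans_eq (mul_comm _ _))

lemma q_le (m n k : ℤ × ℤ) : |q m n k| ≤ nr n := by
  unfold q
  rw [abs_mul]
  have := mul_le_mul (q_first m n) (q_second n k) (abs_nonneg _) (nr_nonneg _)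
  simpa using this

lemma q_le' (m k : ℤ × ℤ) : |q m (k - m) k| ≤ nr k := by
  unfold q
  have e : (m.2 : ℝ) * (k - m).1 - m.1 * (k - m).2 = (m.2 : ℝ) * k.1 - m.1 * k.2 := by
    simp only [Prod.fst_sub, Prod.snd_sub, Int.cast_sub]; ring
  rw [abs_mul, e]
  have := mul_le_mul (q_first m k) (q_second (k - m) k) (abs_nonneg _) (nr_nonneg _)
  simpa using this

lemma Bc_eq (c d : Coef) (k : Freq) :
    Bc c d k = (((2 * Real.pi : ℝ) : ℂ) * Complex.I) *
      ∑' m : ℤ × ℤ, ext c m * ext d (k.1 - m) * ((q m (k.1 - m) k.1 : ℝ) : ℂ) := by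
  unfold Bc
  congr 1
  rw [← tsum_freq (Φ := fun m : ℤ × ℤ =>
    ext c m * ext d (k.1 - m) * ((q m (k.1 - m) k.1 : ℝ) : ℂ)) (by simp)]
  refine tsum_congr fun m => ?_
  by_cases h : k.1 - m.1 ≠ 0
  · have e : ext d (k.1 - m.1) = d ⟨k.1 - m.1, h⟩ := ext_val d ⟨k.1 - m.1, h⟩
    rw [dif_pos h, e, ext_val]
    congr 2
    have e1 : Real.sqrt (knormSq m) = nr m.1 := rfl
    have e2 : Real.sqrt (knormSq k) = nr k.1 := rfl
    have e3 : Real.sqrt (knormSq ⟨k.1 - m.1, h⟩) = nr (k.1 - m.1) := rfl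
    unfold dotR evec fvec q
    rw [e1, e2, e3]
    simp only
    have h1 := (nr_pos m).ne'
    have h2 := (nr_pos k).ne'
    have h3 := (nr_pos ⟨k.1 - m.1, h⟩).ne'
    simp only at h3
    field_simp
    ring
  · rw [dif_neg h]
    push Not at h
    rw [h]; simp

/-! ### Convolution sums -/

/-- The shear `(k, m) ↦ (m, k - m)`. -/
def shear (G : Type*) [AddCommGroup G] : G × G ≃ G × G where
  toFun p := (p.2, p.1 - p.2)
  invFun p := (p.1 + p.2, p.1)
  left_inv p := by simp
  right_inv p := by simp

lemma conv_summable {G : Type*} [AddCommGroup G] {x y : G → ℝ} (hx : ∀ i, 0 ≤ x i)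
    (hy : ∀ i, 0 ≤ y i) (sx : Summable x) (sy : Summable fun i => y i ^ 2) (k : G) :
    Summable fun m => x m * y (k - m) := by
  have sy' : Summable fun m => y (k - m) ^ 2 :=
    sy.comp_injective (i := fun m => k - m) sub_right_injective
  have hb : ∀ m, y (k - m) ≤ 1 + ∑' i, y (k - i) ^ 2 := fun m => by
    have h1 := sy'.le_tsum m (fun j _ => sq_nonneg _)
    nlinarith [sq_nonneg (y (k - m) - 1), sq_nonneg (y (k - m)), hy (k - m)]
  exact Summable.of_nonneg_of_le (fun m => mul_nonneg (hx _) (hy _))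
    (fun m => mul_le_mul_of_nonneg_left (hb m) (hx m)) (sx.mul_right _)

lemma conv_bound {G : Type*} [AddCommGroup G] {x y z : G → ℝ} (hx : ∀ i, 0 ≤ x i)
    (hy : ∀ i, 0 ≤ y i) (hz : ∀ i, 0 ≤ z i) (sx : Summable x)
    (sy : Summable fun i => y i ^ 2) (sz : Summable fun i => z i ^ 2) :
    (Summable fun p : G × G => z p.1 * (x p.2 * y (p.1 - p.2))) ∧
    (Summable fun k => z k * ∑' m, x m * y (k - m)) ∧
      ∑' k, z k * ∑' m, x m * y (k - m) ≤
        (∑' i, x i) * (Real.sqrt (∑' i, y i ^ 2) * Real.sqrt (∑' i, z i ^ 2)) := by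
  obtain ⟨h1, h2⟩ := trilin hx hy hz sx sy sz
  have e : (fun p : G × G => z p.1 * (x p.2 * y (p.1 - p.2))) =
      (fun p : G × G => x p.1 * (y p.2 * z (p.1 + p.2))) ∘ (shear G) := by
    funext p
    simp only [shear, Function.comp, Equiv.coe_fn_mk, add_sub_cancel]
    ring
  have h3 : Summable fun p : G × G => z p.1 * (x p.2 * y (p.1 - p.2)) := by
    rw [e]
    exact h1.comp_injective (shear G).injective
  have h4 : ∑' p : G × G, z p.1 * (x p.2 * y (p.1 - p.2)) =
      ∑' p : G × G, x p.1 * (y p.2 * z (p.1 + p.2)) := by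
    rw [e]
    exact (shear G).tsum_eq (fun p : G × G => x p.1 * (y p.2 * z (p.1 + p.2)))
  have h5 : ∀ k, ∑' m, z k * (x m * y (k - m)) = z k * ∑' m, x m * y (k - m) :=
    fun k => tsum_mul_left
  have h6 := h3.prod
  have h7 := h3.tsum_prod
  simp only [h5] at h6 h7
  refine ⟨h3, h6, ?_⟩
  rw [← h7, h4]
  exact h2

lemma conv_comm {G : Type*} [AddCommGroup G] (x y : G → ℝ) (k : G) :
    ∑' m, x m * y (k - m) = ∑' m, y m * x (k - m) := by
  rw [← (Equiv.subLeft k).tsum_eq (fun m => x m * y (k - m))]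
  refine tsum_congr fun m => ?_
  simp only [Equiv.subLeft_apply, sub_sub_cancel]
  ring

lemma finset_sum_le {F : Finset Freq} {Φ : ℤ × ℤ → ℝ} (h : ∀ k, 0 ≤ Φ k) (hs : Summable Φ) :
    ∑ k ∈ F, Φ k.1 ≤ ∑' k, Φ k := by
  have h1 : Summable fun k : Freq => Φ k.1 := hs.comp_injective freq_inj
  refine (h1.sum_le_tsum F (fun k _ => h k.1)).trans ?_
  exact Summable.tsum_le_tsum_of_inj (fun k : Freq => k.1) freq_inj (fun c _ => h c)
    (fun k => le_rfl) h1 hs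

/-! ### Bounds for the nonlinearity -/

lemma sum_sq_ext {φ : Freq → ℝ} {α : ℝ} {c : Coef} (h : ∀ k, φ k ^ 2 = lam k ^ α * ‖c k‖ ^ 2)
    (hc : FinH α c) :
    (Summable fun k => ext φ k ^ 2) ∧ ∑' k, ext φ k ^ 2 = hSq α c := by
  simp only [ext_sq, h]
  exact ⟨summable_ext.mpr hc, tsum_ext _⟩

lemma nrm_sq (c : Coef) (k : Freq) : ‖c k‖ ^ 2 = lam k ^ (0 : ℝ) * ‖c k‖ ^ 2 := by simp

lemma nrm_sq1 (c : Coef) (k : Freq) :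
    (Real.sqrt (lam k) * ‖c k‖) ^ 2 = lam k ^ (1 : ℝ) * ‖c k‖ ^ 2 := by
  rw [mul_pow, Real.sq_sqrt (lam_pos k).le, Real.rpow_one]

lemma nrm_sq2 (c : Coef) (k : Freq) :
    (lam k * ‖c k‖) ^ 2 = lam k ^ (2 : ℝ) * ‖c k‖ ^ 2 := by
  rw [mul_pow, Real.rpow_two]

lemma two_pi_I_norm : ‖((2 * Real.pi : ℝ) : ℂ) * Complex.I‖ = 2 * Real.pi := by
  rw [norm_mul, Complex.norm_I, mul_one, Complex.norm_real, Real.norm_of_nonneg]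
  have := Real.pi_pos
  positivity

lemma ext_nr (c : Coef) (n : ℤ × ℤ) :
    2 * Real.pi * (‖ext c n‖ * nr n) = ext (fun k => Real.sqrt (lam k) * ‖c k‖) n := by
  induction n using ext_cases with
  | h0 => simp
  | h1 k => simp only [ext_val, sqrt_lam]; ring

/-- Summability of the series defining `Bc`. -/
lemma Bc_summable {c d : Coef} (hc : FinH 2 c) (hd : FinH 2 d) (k : Freq) :
    Summable fun m : ℤ × ℤ => ext c m * ext d (k.1 - m) * ((q m (k.1 - m) k.1 : ℝ) : ℂ) := by
  have h0 := conv_summable (x := ext fun k => ‖c k‖) (y := ext fun k => ‖d k‖)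
    (ext_nonneg fun k => norm_nonneg _) (ext_nonneg fun k => norm_nonneg _)
    (summable_ext.mpr (l1_bound hc).1) (sum_sq_ext (nrm_sq d) (hd.mono zero_le_two)).1 k.1
  refine Summable.of_norm_bounded (h0.mul_right (nr k.1)) (fun m => ?_)
  rw [norm_mul, norm_mul, norm_ext, norm_ext, Complex.norm_real, Real.norm_eq_abs]
  exact mul_le_mul_of_nonneg_left (q_le' m k.1)
    (mul_nonneg (ext_nonneg (fun _ => norm_nonneg _) _) (ext_nonneg (fun _ => norm_nonneg _) _))

lemma Bc_norm_le {c d : Coef} (hc : FinH 2 c) (hd : FinH 2 d) (k : Freq) :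
    ‖Bc c d k‖ ≤ ∑' m : ℤ × ℤ, ext (fun k => ‖c k‖) m *
      ext (fun k => Real.sqrt (lam k) * ‖d k‖) (k.1 - m) := by
  have h0 := conv_summable (x := ext fun k => ‖c k‖)
    (y := ext fun k => Real.sqrt (lam k) * ‖d k‖)
    (ext_nonneg fun k => norm_nonneg _)
    (ext_nonneg fun k => mul_nonneg (Real.sqrt_nonneg _) (norm_nonneg _))
    (summable_ext.mpr (l1_bound hc).1) (sum_sq_ext (nrm_sq1 d) (hd.mono one_le_two)).1 k.1
  rw [Bc_eq, ← tsum_mul_left]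
  refine tsum_of_norm_bounded h0.hasSum (fun m => ?_)
  rw [norm_mul, two_pi_I_norm, norm_mul, norm_mul, ← ext_nr, ← norm_ext, Complex.norm_real,
    Real.norm_eq_abs]
  have h1 := mul_le_mul_of_nonneg_left (q_le m (k.1 - m) k.1)
    (show 0 ≤ 2 * Real.pi * (‖ext c m‖ * ‖ext d (k.1 - m)‖) by
      have := Real.pi_pos
      positivity)
  refine le_trans (le_of_eq (by ring)) (h1.trans (le_of_eq (by ring)))

lemma ext_sub (c d : Coef) (k : ℤ × ℤ) : ext (c - d) k = ext c k - ext d k := by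
  induction k using ext_cases with
  | h0 => simp
  | h1 k => simp

lemma Bc_diff_le {u v : Coef} (hu : FinH 2 u) (hv : FinH 2 v) (k : Freq) :
    ‖Bc u u k - Bc v v k‖ ≤ Real.sqrt (lam k) *
      ((∑' m : ℤ × ℤ, ext (fun k => ‖u k‖) m * ext (fun k => ‖(u - v) k‖) (k.1 - m)) +
       ∑' m : ℤ × ℤ, ext (fun k => ‖v k‖) m * ext (fun k => ‖(u - v) k‖) (k.1 - m)) := by
  have hw : FinH 2 (u - v) := hu.sub hv
  have h1 := conv_summable (x := ext fun k => ‖u k‖) (y := ext fun k => ‖(u - v) k‖)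
    (ext_nonneg fun k => norm_nonneg _) (ext_nonneg fun k => norm_nonneg _)
    (summable_ext.mpr (l1_bound hu).1) (sum_sq_ext (nrm_sq (u - v)) (hw.mono zero_le_two)).1 k.1
  have h2 := conv_summable (x := ext fun k => ‖(u - v) k‖) (y := ext fun k => ‖v k‖)
    (ext_nonneg fun k => norm_nonneg _) (ext_nonneg fun k => norm_nonneg _)
    (summable_ext.mpr (l1_bound hw).1) (sum_sq_ext (nrm_sq v) (hv.mono zero_le_two)).1 k.1
  rw [conv_comm (ext fun k => ‖v k‖), ← h1.tsum_add h2, ← tsum_mul_left, Bc_eq, Bc_eq, ← mul_sub,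
    ← (Bc_summable hu hu k).tsum_sub (Bc_summable hv hv k), ← tsum_mul_left]
  refine tsum_of_norm_bounded ((h1.add h2).mul_left _).hasSum (fun m => ?_)
  have e : ext u m * ext u (k.1 - m) * ((q m (k.1 - m) k.1 : ℝ) : ℂ) -
      ext v m * ext v (k.1 - m) * ((q m (k.1 - m) k.1 : ℝ) : ℂ) =
      (ext u m * ext (u - v) (k.1 - m) + ext (u - v) m * ext v (k.1 - m)) *
        ((q m (k.1 - m) k.1 : ℝ) : ℂ) := by
    rw [ext_sub, ext_sub]; ring
  rw [e, norm_mul, two_pi_I_norm, norm_mul, ← norm_ext, ← norm_ext, ← norm_ext, ← norm_ext,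
    Complex.norm_real, Real.norm_eq_abs, sqrt_lam]
  have h3 : ‖ext u m * ext (u - v) (k.1 - m) + ext (u - v) m * ext v (k.1 - m)‖ ≤
      ‖ext u m‖ * ‖ext (u - v) (k.1 - m)‖ + ‖ext (u - v) m‖ * ‖ext v (k.1 - m)‖ := by
    refine (norm_add_le _ _).trans ?_
    rw [norm_mul, norm_mul]
  have h4 := mul_le_mul h3 (q_le' m k.1) (abs_nonneg _) (by positivity)
  have h5 := mul_le_mul_of_nonneg_left h4 (show 0 ≤ 2 * Real.pi by
    have := Real.pi_pos
    positivity)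
  exact h5.trans (le_of_eq (by ring))

/-- Estimate used for the `Ḣ⁻¹` energy inequality. -/
lemma est_A {u v : Coef} (hu : FinH 2 u) (hv : FinH 2 v) (F : Finset Freq) :
    ∑ k ∈ F, (lam k)⁻¹ * (‖(u - v) k‖ * ‖Bc u u k - Bc v v k‖) ≤
      (l1 u + l1 v) * (Real.sqrt (hSq 0 (u - v)) *
        Real.sqrt (∑ k ∈ F, (lam k)⁻¹ * ‖(u - v) k‖ ^ 2)) := by
  classical
  have hw : FinH 2 (u - v) := hu.sub hv
  set φ : Freq → ℝ := fun k => if k ∈ F then (Real.sqrt (lam k))⁻¹ * ‖(u - v) k‖ else 0 with hφ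
  have φ0 : ∀ k, 0 ≤ φ k := fun k => by
    simp only [hφ]; split_ifs <;> positivity
  have φsq : ∀ k, φ k ^ 2 = if k ∈ F then (lam k)⁻¹ * ‖(u - v) k‖ ^ 2 else 0 := fun k => by
    simp only [hφ]
    split_ifs
    · rw [mul_pow, inv_pow, Real.sq_sqrt (lam_pos k).le]
    · simp
  have φs : Summable fun k => ext φ k ^ 2 := by
    simp only [ext_sq]
    refine summable_ext.mpr (summable_of_ne_finset_zero (s := F) fun k hk => ?_)
    rw [φsq, if_neg hk]
  have φt : ∑' k, ext φ k ^ 2 = ∑ k ∈ F, (lam k)⁻¹ * ‖(u - v) k‖ ^ 2 := by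
    simp only [ext_sq]
    rw [tsum_ext, tsum_eq_sum (s := F) (fun k hk => by rw [φsq, if_neg hk])]
    exact Finset.sum_congr rfl fun k hk => by rw [φsq, if_pos hk]
  obtain ⟨ws, wt⟩ := sum_sq_ext (nrm_sq (u - v)) (hw.mono zero_le_two)
  obtain ⟨-, a2, a3⟩ := conv_bound (x := ext fun k => ‖u k‖) (y := ext fun k => ‖(u - v) k‖)
    (z := ext φ) (ext_nonneg fun k => norm_nonneg _) (ext_nonneg fun k => norm_nonneg _)
    (ext_nonneg φ0) (summable_ext.mpr (l1_bound hu).1) ws φs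
  obtain ⟨-, b2, b3⟩ := conv_bound (x := ext fun k => ‖v k‖) (y := ext fun k => ‖(u - v) k‖)
    (z := ext φ) (ext_nonneg fun k => norm_nonneg _) (ext_nonneg fun k => norm_nonneg _)
    (ext_nonneg φ0) (summable_ext.mpr (l1_bound hv).1) ws φs
  rw [φt, wt, tsum_ext] at a3 b3
  have a4 := finset_sum_le (F := F) (fun k => mul_nonneg (ext_nonneg φ0 k) (tsum_nonneg fun m =>
    mul_nonneg (ext_nonneg (fun _ => norm_nonneg _) _) (ext_nonneg (fun _ => norm_nonneg _) _))) a2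
  have b4 := finset_sum_le (F := F) (fun k => mul_nonneg (ext_nonneg φ0 k) (tsum_nonneg fun m =>
    mul_nonneg (ext_nonneg (fun _ => norm_nonneg _) _) (ext_nonneg (fun _ => norm_nonneg _) _))) b2
  have key : ∑ k ∈ F, (lam k)⁻¹ * (‖(u - v) k‖ * ‖Bc u u k - Bc v v k‖) ≤
      (∑ k ∈ F, ext φ k.1 * ∑' m : ℤ × ℤ, ext (fun k => ‖u k‖) m *
        ext (fun k => ‖(u - v) k‖) (k.1 - m)) +
      ∑ k ∈ F, ext φ k.1 * ∑' m : ℤ × ℤ, ext (fun k => ‖v k‖) m *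
        ext (fun k => ‖(u - v) k‖) (k.1 - m) := by
    rw [← Finset.sum_add_distrib]
    refine Finset.sum_le_sum fun k hk => ?_
    rw [ext_val, ← mul_add]
    have e : φ k = (Real.sqrt (lam k))⁻¹ * ‖(u - v) k‖ := by simp only [hφ, if_pos hk]
    have h1 := Bc_diff_le hu hv k
    have hl : 0 < Real.sqrt (lam k) := Real.sqrt_pos.mpr (lam_pos k)
    have h2 := mul_le_mul_of_nonneg_left h1 (show 0 ≤ (lam k)⁻¹ * ‖(u - v) k‖ by
      have := lam_pos k
      positivity)
    rw [← mul_assoc]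
    refine h2.trans (le_of_eq ?_)
    rw [e]
    have e2 : (lam k)⁻¹ = (Real.sqrt (lam k))⁻¹ * (Real.sqrt (lam k))⁻¹ := by
      rw [← mul_inv, Real.mul_self_sqrt (lam_pos k).le]
    rw [e2]
    field_simp
  have : l1 u = ∑' k, ‖u k‖ := rfl
  have : l1 v = ∑' k, ‖v k‖ := rfl
  unfold l1
  rw [add_mul]
  linarith

/-- Estimate used for the enstrophy identity. -/
lemma est_B {u : Coef} (hu : FinH 2 u) (F : Finset Freq) :
    ∑ k ∈ F, lam k * (‖u k‖ * ‖Bc u u k‖) ≤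
      l1 u * (Real.sqrt (hSq 1 u) * Real.sqrt (hSq 2 u)) := by
  have n1 : ∀ k : Freq, 0 ≤ Real.sqrt (lam k) * ‖u k‖ := fun k => by positivity
  have n2 : ∀ k : Freq, 0 ≤ lam k * ‖u k‖ := fun k =>
    mul_nonneg (lam_pos k).le (norm_nonneg _)
  obtain ⟨s1, t1⟩ := sum_sq_ext (nrm_sq1 u) (hu.mono one_le_two)
  obtain ⟨s2, t2⟩ := sum_sq_ext (nrm_sq2 u) hu
  obtain ⟨-, a2, a3⟩ := conv_bound (x := ext fun k => ‖u k‖)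
    (y := ext fun k => Real.sqrt (lam k) * ‖u k‖) (z := ext fun k => lam k * ‖u k‖)
    (ext_nonneg fun k => norm_nonneg _) (ext_nonneg n1)
    (ext_nonneg n2) (summable_ext.mpr (l1_bound hu).1) s1 s2
  rw [t1, t2, tsum_ext] at a3
  have a4 := finset_sum_le (F := F) (fun k => mul_nonneg (ext_nonneg n2 k) (tsum_nonneg fun m =>
    mul_nonneg (ext_nonneg (fun _ => norm_nonneg _) _) (ext_nonneg n1 _))) a2
  refine le_trans (Finset.sum_le_sum fun k _ => ?_) (a4.trans a3)
  rw [ext_val, ← mul_assoc]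
  exact mul_le_mul_of_nonneg_left (Bc_norm_le hu hu k) (n2 k)

/-! ### The enstrophy cancellation -/

/-- Rotation `(m, n, p) ↦ (n, p, m)` of triads `m + n + p = 0`. -/
def rot (G : Type*) [AddCommGroup G] : G × G ≃ G × G where
  toFun p := (p.2, -(p.1 + p.2))
  invFun p := (-(p.1 + p.2), p.1)
  left_inv p := by ext <;> simp
  right_inv p := by ext <;> simp

/-- Antisymmetric triad weight. -/
def TT (m n : ℤ × ℤ) : ℝ :=
  -((((m + n).1 : ℝ) ^ 2 + ((m + n).2 : ℝ) ^ 2) * ((m.2 : ℝ) * n.1 - m.1 * n.2) *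
    ((n.1 : ℝ) * (m + n).1 + n.2 * (m + n).2))

lemma TT_cancel (m n : ℤ × ℤ) :
    TT m n + TT n m + (TT n (-(m + n)) + TT (-(m + n)) n) + (TT (-(m + n)) m + TT m (-(m + n)))
      = 0 := by
  unfold TT
  simp only [Prod.fst_add, Prod.snd_add, Prod.fst_neg, Prod.snd_neg, Int.cast_add, Int.cast_neg]
  ring

lemma triad_tsum (a : ℤ × ℤ → ℂ)
    (hs : Summable fun p : (ℤ × ℤ) × (ℤ × ℤ) =>
      ((TT p.1 p.2 : ℝ) : ℂ) * (a p.1 * a p.2 * a (-(p.1 + p.2)))) :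
    ∑' p : (ℤ × ℤ) × (ℤ × ℤ), ((TT p.1 p.2 : ℝ) : ℂ) * (a p.1 * a p.2 * a (-(p.1 + p.2))) = 0 := by
  set H : (ℤ × ℤ) × (ℤ × ℤ) → ℂ := fun p =>
    ((TT p.1 p.2 : ℝ) : ℂ) * (a p.1 * a p.2 * a (-(p.1 + p.2))) with hH
  have h0 := hs.hasSum
  have h1 : HasSum (fun p => H p + H p.swap) (∑' p, H p + ∑' p, H p) :=
    h0.add ((Equiv.prodComm (ℤ × ℤ) (ℤ × ℤ)).hasSum_iff.mpr h0)
  have h2 := (rot (ℤ × ℤ)).hasSum_iff.mpr h1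
  have h3 := (rot (ℤ × ℤ)).hasSum_iff.mpr h2
  have h4 := (h1.add h2).add h3
  have e : (fun p => H p + H p.swap + ((fun p => H p + H p.swap) ∘ (rot (ℤ × ℤ))) p +
      (((fun p => H p + H p.swap) ∘ (rot (ℤ × ℤ))) ∘ (rot (ℤ × ℤ))) p) = fun _ => 0 := by
    funext p
    obtain ⟨m, n⟩ := p
    have i1 : -(n + -(m + n)) = m := by abel
    have i2 : -(-(m + n) + n) = m := by abel
    have i3 : -(-(m + n) + m) = n := by abel
    have i4 : -(m + -(m + n)) = n := by abel
    have i5 : -(n + m) = -(m + n) := by abel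
    simp only [hH, Function.comp, rot, Equiv.coe_fn_mk, Prod.swap_prod_mk, i1, i2, i3, i4, i5]
    have := congrArg (fun x : ℝ => (x : ℂ)) (TT_cancel m n)
    push_cast at this
    linear_combination (a m * a n * a (-(m + n))) * this
  rw [e] at h4
  have h5 := h4.unique hasSum_zero
  have : 6 * ∑' p, H p = 0 := by linear_combination h5
  simpa using this

/-- The summand of the enstrophy production term. -/
def GG (u : Coef) (p : (ℤ × ℤ) × (ℤ × ℤ)) : ℂ :=
  (((2 * Real.pi * nr p.1) ^ 2 : ℝ) : ℂ) * (starRingEnd ℂ) (ext u p.1) *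
    (ext u p.2 * ext u (p.1 - p.2) * ((q p.2 (p.1 - p.2) p.1 : ℝ) : ℂ))

lemma ext_lam (u : Coef) (k : ℤ × ℤ) :
    (2 * Real.pi * nr k) ^ 2 * ‖ext u k‖ = ext (fun k => lam k * ‖u k‖) k := by
  induction k using ext_cases with
  | h0 => simp
  | h1 k => simp only [ext_val, lam_eq]

lemma GG_summable {u : Coef} (hu : FinH 2 u) : Summable (GG u) := by
  have n1 : ∀ k : Freq, 0 ≤ Real.sqrt (lam k) * ‖u k‖ := fun k => by positivity
  have n2 : ∀ k : Freq, 0 ≤ lam k * ‖u k‖ := fun k =>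
    mul_nonneg (lam_pos k).le (norm_nonneg _)
  obtain ⟨s1, t1⟩ := sum_sq_ext (nrm_sq1 u) (hu.mono one_le_two)
  obtain ⟨s2, t2⟩ := sum_sq_ext (nrm_sq2 u) hu
  obtain ⟨a1, -, -⟩ := conv_bound (x := ext fun k => ‖u k‖)
    (y := ext fun k => Real.sqrt (lam k) * ‖u k‖) (z := ext fun k => lam k * ‖u k‖)
    (ext_nonneg fun k => norm_nonneg _) (ext_nonneg n1)
    (ext_nonneg n2) (summable_ext.mpr (l1_bound hu).1) s1 s2
  refine Summable.of_norm_bounded a1 (fun p => ?_)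
  obtain ⟨k, m⟩ := p
  unfold GG
  simp only
  rw [norm_mul, norm_mul, norm_mul, norm_mul, RCLike.norm_conj, Complex.norm_real,
    Complex.norm_real, Real.norm_of_nonneg (sq_nonneg _), ext_lam, ← norm_ext, ← ext_nr,
    Real.norm_eq_abs]
  refine mul_le_mul_of_nonneg_left ?_ (ext_nonneg n2 k)
  rw [mul_assoc]
  refine mul_le_mul_of_nonneg_left ?_ (norm_nonneg _)
  have h1 := mul_le_mul_of_nonneg_left (q_le m (k - m) k) (norm_nonneg (ext u (k - m)))
  refine h1.trans (le_mul_of_one_le_left (mul_nonneg (norm_nonneg _) (nr_nonneg _)) ?_)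
  have := Real.pi_gt_three
  linarith

lemma ext_conj {u : Coef} (hr : IsReal u) (k : ℤ × ℤ) :
    (starRingEnd ℂ) (ext u k) = - ext u (-k) := by
  induction k using ext_cases with
  | h0 => simp
  | h1 k =>
    have e : ext u (-k.1) = u (fneg k) := ext_val u (fneg k)
    rw [e, hr k, ext_val, neg_neg]

lemma nr_neg (k : ℤ × ℤ) : nr (-k) = nr k := by
  unfold nr; simp

lemma GG_tsum {u : Coef} (hu : FinH 2 u) (hr : IsReal u) : ∑' p, GG u p = 0 := by
  set a : ℤ × ℤ → ℂ := fun m => ext u m * (((nr m)⁻¹ : ℝ) : ℂ) with ha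
  have e : ∀ p : (ℤ × ℤ) × (ℤ × ℤ), GG u ((shear (ℤ × ℤ)).symm p) =
      ((4 * Real.pi ^ 2 : ℝ) : ℂ) *
        (((TT p.1 p.2 : ℝ) : ℂ) * (a p.1 * a p.2 * a (-(p.1 + p.2)))) := by
    rintro ⟨m, n⟩
    have e1 : (shear (ℤ × ℤ)).symm (m, n) = (m + n, m) := rfl
    rw [e1]
    unfold GG
    simp only [ha, add_sub_cancel_left, ext_conj hr, nr_neg]
    unfold q TT
    rw [← nr_sq]
    push_cast
    ring
  have hs := (shear (ℤ × ℤ)).symm.summable_iff.mpr (GG_summable hu)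
  have hs2 : Summable fun p : (ℤ × ℤ) × (ℤ × ℤ) => ((4 * Real.pi ^ 2 : ℝ) : ℂ) *
        (((TT p.1 p.2 : ℝ) : ℂ) * (a p.1 * a p.2 * a (-(p.1 + p.2)))) :=
    hs.congr (fun p => (e p))
  rw [← (shear (ℤ × ℤ)).symm.tsum_eq (GG u), tsum_congr e, tsum_mul_left, triad_tsum a, mul_zero]
  refine (summable_mul_left_iff ?_).mp hs2
  have := Real.pi_pos
  exact_mod_cast (by positivity : (4 * Real.pi ^ 2 : ℝ) ≠ 0)

lemma enstrophy_cancel {u : Coef} (hu : FinH 2 u) (hr : IsReal u) :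
    HasSum (fun k : Freq => lam k * inner ℝ (u k) (Bc u u k)) 0 := by
  have h1 : HasSum (GG u) 0 := by
    rw [← GG_tsum hu hr]; exact (GG_summable hu).hasSum
  have h2 : HasSum (fun k => ∑' m, GG u (k, m)) 0 :=
    h1.prod_fiberwise fun k => ((GG_summable hu).prod_factor k).hasSum
  have h3 := (hasSum_freq (Φ := fun k => ∑' m, GG u (k, m)) (by simp [GG])).mpr h2
  have h4 := h3.mul_left (((2 * Real.pi : ℝ) : ℂ) * Complex.I)
  have h5 : HasSum (fun k : Freq => (((2 * Real.pi : ℝ) : ℂ) * Complex.I) *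
      ∑' m, GG u (k.1, m)) 0 := by simpa using h4
  have h6 := Complex.hasSum_re h5
  have e : ∀ k : Freq, ((((2 * Real.pi : ℝ) : ℂ) * Complex.I) * ∑' m, GG u (k.1, m)).re =
      lam k * inner ℝ (u k) (Bc u u k) := by
    intro k
    unfold GG
    simp only
    rw [tsum_mul_left, ← lam_eq, ext_val, Complex.inner, Bc_eq, ← Complex.re_ofReal_mul]
    congr 1
    ring
  simpa only [e, Complex.zero_re] using h6

/-! ### A Gronwall type lemma -/

lemma log_gronwall {T C H : ℝ} {y y' h g : ℝ → ℝ} (hc : ContinuousOn y (Icc 0 T))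
    (hd : ∀ t ∈ Ioo 0 T, HasDerivAt y (y' t) t) (y0 : ∀ t, 0 ≤ y t) (h0 : ∀ t, 0 ≤ h t)
    (g0 : ∀ t, 0 ≤ g t) (hInt : IntegrableOn h (Ioc 0 T)) (gint : IntegrableOn g (Ioc 0 T))
    (hC : 0 ≤ C) (hH : 0 < H) (hle : ∀ t ∈ Ioo 0 T, -(C * h t) - g t * y t ≤ y' t)
    (hCH : C * ∫ t in (0 : ℝ)..T, h t ≤ H) {t : ℝ} (ht : t ∈ Icc 0 T) :
    y 0 + H ≤ Real.exp (1 + ∫ t in (0 : ℝ)..T, g t) * (y t + H) := by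
  have hT : 0 ≤ T := ht.1.trans ht.2
  have pos : ∀ s, 0 < y s + H := fun s => by have := y0 s; linarith
  have φint : IntegrableOn (fun s => C / H * h s + g s) (Ioc 0 T) :=
    (hInt.const_mul (C / H)).add gint
  have φ0 : ∀ s, 0 ≤ C / H * h s + g s := fun s =>
    add_nonneg (mul_nonneg (div_nonneg hC hH.le) (h0 s)) (g0 s)
  have key := intervalIntegral.sub_le_integral_of_hasDeriv_right_of_le (a := 0) (b := t)
    (g := fun s => -Real.log (y s + H)) (g' := fun s => -(y' s / (y s + H)))
    (φ := fun s => C / H * h s + g s) ht.1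
    (((hc.mono (Icc_subset_Icc_right ht.2)).add continuousOn_const).log
      (fun s _ => (pos s).ne')).neg
    (fun s hs => (((hd s ⟨hs.1, hs.2.trans_le ht.2⟩).add_const H).log
      (pos s).ne').neg.hasDerivWithinAt)
    (Iff.mpr (integrableOn_Icc_iff_integrableOn_Ioc (by finiteness)) (φint.mono_set (Ioc_subset_Ioc_right ht.2)))
    (fun s hs => by
      have h1 := hle s ⟨hs.1, hs.2.trans_le ht.2⟩
      rw [← neg_div, div_le_iff₀ (pos s)]
      have h2 : C / H * h s * H = C * h s := by field_simp
      have h3 : 0 ≤ C / H * h s * y s :=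
        mul_nonneg (mul_nonneg (div_nonneg hC hH.le) (h0 s)) (y0 s)
      have h4 : 0 ≤ g s * H := mul_nonneg (g0 s) hH.le
      nlinarith)
  have hInt' : IntervalIntegrable h volume 0 T :=
    (intervalIntegrable_iff_integrableOn_Ioc_of_le hT).mpr hInt
  have gint' : IntervalIntegrable g volume 0 T :=
    (intervalIntegrable_iff_integrableOn_Ioc_of_le hT).mpr gint
  have φint' : IntervalIntegrable (fun s => C / H * h s + g s) volume 0 T :=
    (intervalIntegrable_iff_integrableOn_Ioc_of_le hT).mpr φint
  have k2 : ∫ s in (0 : ℝ)..t, (C / H * h s + g s) ≤ ∫ s in (0 : ℝ)..T, (C / H * h s + g s) :=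
    intervalIntegral.integral_mono_interval le_rfl ht.1 ht.2
      (Filter.Eventually.of_forall φ0) φint'
  have k3 : ∫ s in (0 : ℝ)..T, (C / H * h s + g s) ≤ 1 + ∫ s in (0 : ℝ)..T, g s := by
    rw [intervalIntegral.integral_add (hInt'.const_mul _) gint',
      intervalIntegral.integral_const_mul]
    have : C / H * ∫ s in (0 : ℝ)..T, h s ≤ 1 := by
      rw [div_mul_eq_mul_div]
      exact div_le_one_of_le₀ hCH hH.le
    linarith
  have k4 : Real.log (y 0 + H) ≤ (1 + ∫ s in (0 : ℝ)..T, g s) + Real.log (y t + H) := by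
    have := key.trans (k2.trans k3)
    linarith
  have k5 := Real.exp_le_exp.mpr k4
  rwa [Real.exp_add, Real.exp_log (pos 0), Real.exp_log (pos t)] at k5

/-! ### Regularity of solutions -/

section sol

variable {ν T : ℝ} {f θ : Coef} {u : ℝ → Coef}

lemma IsNSSol.fin2 (hu : IsNSSol ν f T θ u) (hθ : MemH 2 θ) {t : ℝ} (ht : t ∈ Icc 0 T) :
    FinH 2 (u t) := by
  rcases ht.1.eq_or_lt with h | h
  · rw [← h, hu.init]; exact hθ.2
  · exact (hu.memL2H2.1 t ⟨h, ht.2⟩).2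

lemma coef_le {c : Coef} (hc : FinH 1 c) (k : Freq) : ‖c k‖ ≤ hN 1 c := by
  have h1 := Summable.le_tsum hc k (fun j _ => term_nonneg 1 c j)
  rw [Real.rpow_one] at h1
  refine Real.le_sqrt_of_sq_le (le_trans ?_ h1)
  exact le_mul_of_one_le_left (sq_nonneg _) (one_le_lam k)

lemma IsNSSol.cont (hu : IsNSSol ν f T θ u) (hθ : MemH 2 θ) (k : Freq) :
    ContinuousOn (fun t => u t k) (Icc 0 T) := by
  rw [Metric.continuousOn_iff]
  intro t ht ε hε
  obtain ⟨δ, hδ, h⟩ := hu.contH1 t ht ε hε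
  refine ⟨δ, hδ, fun s hs hst => ?_⟩
  rw [dist_eq_norm]
  exact (coef_le (((hu.fin2 hθ hs).sub (hu.fin2 hθ ht)).mono one_le_two) k).trans_lt
    (h s hs (by rwa [Real.dist_eq] at hst))

lemma IsNSSol.bdd (hu : IsNSSol ν f T θ u) (hθ : MemH 2 θ) :
    ∃ K, 0 ≤ K ∧ ∀ t ∈ Icc 0 T, hSq 1 (u t) ≤ K := by
  have hcpt : IsCompact (Icc (0 : ℝ) T) := isCompact_Icc
  have h : ∃ K, ∀ t ∈ Icc 0 T, hSq 1 (u t) ≤ K := by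
    refine hcpt.induction_on (p := fun s => ∃ K, ∀ t ∈ s, hSq 1 (u t) ≤ K)
      ⟨0, by simp⟩ ?_ ?_ ?_
    · rintro s t hst ⟨K, hK⟩
      exact ⟨K, fun x hx => hK x (hst hx)⟩
    · rintro s t ⟨K, hK⟩ ⟨K', hK'⟩
      refine ⟨max K K', fun x hx => ?_⟩
      rcases hx with hx | hx
      · exact (hK x hx).trans (le_max_left _ _)
      · exact (hK' x hx).trans (le_max_right _ _)
    · intro t ht
      obtain ⟨δ, hδ, h⟩ := hu.contH1 t ht 1 one_pos
      refine ⟨Icc 0 T ∩ Metric.ball t δ, inter_mem_nhdsWithin _ (Metric.ball_mem_nhds t hδ),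
        2 * 1 + 2 * (2 * hSq 1 (u t) + 2 * hSq 1 0), ?_⟩
      rintro s ⟨hs, hsd⟩
      have h1 := h s hs (by rwa [Metric.mem_ball, Real.dist_eq] at hsd)
      have fs := (hu.fin2 hθ hs).mono one_le_two
      have ft := (hu.fin2 hθ ht).mono one_le_two
      have f0 : FinH 1 (0 : Coef) := by
        unfold FinH; simp
      have h2 : hSq 1 (u s - u t) ≤ 1 := by
        rw [← hN_sq]
        have : 0 ≤ hN 1 (u s - u t) := Real.sqrt_nonneg _
        nlinarith
      have h3 := hSq_sub_le (fs.sub ft) (f0.sub ft)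
      have h4 := hSq_sub_le f0 ft
      have e : (u s - u t) - (0 - u t) = u s := by abel
      rw [e] at h3
      linarith
  obtain ⟨K, hK⟩ := h
  exact ⟨max K 0, le_max_right _ _, fun t ht => (hK t ht).trans (le_max_left _ _)⟩

lemma IsNSSol.meas (hu : IsNSSol ν f T θ u) (hθ : MemH 2 θ) (k : Freq) :
    AEStronglyMeasurable (fun t => u t k) (volume.restrict (Ioc 0 T)) :=
  ((hu.cont hθ k).mono Ioc_subset_Icc_self).aestronglyMeasurable measurableSet_Ioc

lemma IsNSSol.measB (hu : IsNSSol ν f T θ u) (hθ : MemH 2 θ) (k : Freq) :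
    AEStronglyMeasurable (fun t => Bc (u t) (u t) k) (volume.restrict (Ioc 0 T)) := by
  have h1 : AEStronglyMeasurable
      (fun t => f k - ((ν * lam k : ℝ) : ℂ) * u t k - _root_.deriv (fun s => u s k) t)
      (volume.restrict (Ioc 0 T)) :=
    (aestronglyMeasurable_const.sub ((hu.meas hθ k).const_mul _)).sub
      (stronglyMeasurable_deriv (fun s => u s k)).aestronglyMeasurable
  refine h1.congr ?_
  filter_upwards [ae_restrict_mem measurableSet_Ioc] with t ht
  rw [(hu.deriv k t ht).deriv]
  ring

lemma inner_sub_le (ν : ℝ) (hν : 0 < ν) (l : ℝ) (x a b : ℂ) :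
    l * (2 * inner ℝ x (a - ((ν * l : ℝ) : ℂ) * x - b)) ≤
      ν⁻¹ * ‖a‖ ^ 2 - ν * (l ^ 2 * ‖x‖ ^ 2) - 2 * (l * inner ℝ x b) := by
  have e : ((ν * l : ℝ) : ℂ) * x = (ν * l : ℝ) • x := by simp
  rw [e, inner_sub_right, inner_sub_right, real_inner_smul_right, real_inner_self_eq_norm_sq]
  have h1 : 0 ≤ ν⁻¹ * ‖a - (ν * l : ℝ) • x‖ ^ 2 := by positivity
  rw [norm_sub_sq_real, real_inner_smul_right, norm_smul, mul_pow, real_inner_comm] at h1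
  rw [Real.norm_eq_abs, sq_abs] at h1
  have h2 : ν⁻¹ * (‖a‖ ^ 2 - 2 * (ν * l * inner ℝ x a) + (ν * l) ^ 2 * ‖x‖ ^ 2) =
      ν⁻¹ * ‖a‖ ^ 2 - 2 * l * inner ℝ x a + ν * l ^ 2 * ‖x‖ ^ 2 := by
    field_simp
  rw [h2] at h1
  nlinarith

/-- Uniform bound of the solution in `L²([0,T], Ḣ²)`, by the enstrophy balance. -/
lemma IsNSSol.enstrophy (hT : 0 < T) (hν : 0 < ν) (hf : MemH 1 f) (hu : IsNSSol ν f T θ u)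
    (hθ : MemH 2 θ) :
    ν * ∫ t in (0 : ℝ)..T, hSq 2 (u t) ≤ hSq 1 θ + T * (ν⁻¹ * hSq 0 f) := by
  obtain ⟨K, hK0, hK⟩ := hu.bdd hθ
  have hInt : IntegrableOn (fun t => hSq 2 (u t)) (Ioc 0 T) := hu.memL2H2.2
  have hInt' : IntervalIntegrable (fun t => hSq 2 (u t)) volume 0 T :=
    (intervalIntegrable_iff_integrableOn_Ioc_of_le hT.le).mpr hInt
  have hf0 : FinH 0 f := hf.2.mono zero_le_one
  set R : Finset Freq → ℝ → ℝ := fun F t =>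
    ∑ k ∈ F, lam k * inner ℝ (u t k) (Bc (u t) (u t) k) with hR
  set D : Finset Freq → ℝ → ℝ := fun F t => ∑ k ∈ F, lam k ^ (2 : ℝ) * ‖u t k‖ ^ 2 with hD
  have Rbd : ∀ F, ∀ t ∈ Ioc 0 T, ‖|R F t|‖ ≤ Real.sqrt KK * Real.sqrt K * hSq 2 (u t) := by
    intro F t ht
    have ht' := Ioc_subset_Icc_self ht
    have f2 := hu.fin2 hθ ht'
    have h1 : |R F t| ≤ ∑ k ∈ F, lam k * (‖u t k‖ * ‖Bc (u t) (u t) k‖) := by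
      refine (Finset.abs_sum_le_sum_abs _ _).trans (Finset.sum_le_sum fun k _ => ?_)
      rw [abs_mul, abs_of_pos (lam_pos k)]
      exact mul_le_mul_of_nonneg_left (abs_real_inner_le_norm _ _) (lam_pos k).le
    have h2 := est_B f2 F
    have h3 : l1 (u t) ≤ Real.sqrt KK * Real.sqrt (hSq 2 (u t)) := by
      rw [← Real.sqrt_mul KK_nonneg]
      exact Real.le_sqrt_of_sq_le (l1_bound f2).2
    have h4 : Real.sqrt (hSq 1 (u t)) ≤ Real.sqrt K := Real.sqrt_le_sqrt (hK t ht')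
    have h5 := Real.mul_self_sqrt (hSq_nonneg 2 (u t))
    rw [Real.norm_eq_abs, abs_abs]
    calc |R F t| ≤ l1 (u t) * (Real.sqrt (hSq 1 (u t)) * Real.sqrt (hSq 2 (u t))) := h1.trans h2
      _ ≤ (Real.sqrt KK * Real.sqrt (hSq 2 (u t))) * (Real.sqrt K * Real.sqrt (hSq 2 (u t))) := by
          have := l1_nonneg (u t)
          gcongr
      _ = Real.sqrt KK * Real.sqrt K * hSq 2 (u t) := by
          linear_combination (Real.sqrt KK * Real.sqrt K) * h5
  have Rmeas : ∀ F, AEStronglyMeasurable (fun t => |R F t|) (volume.restrict (Ioc 0 T)) := by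
    intro F
    refine AEStronglyMeasurable.norm (f := R F) ?_
    refine Finset.aestronglyMeasurable_fun_sum F fun k _ => ?_
    exact ((hu.meas hθ k).inner (hu.measB hθ k)).const_mul _
  have Dmeas : ∀ F, AEStronglyMeasurable (D F) (volume.restrict (Ioc 0 T)) := by
    intro F
    refine Finset.aestronglyMeasurable_fun_sum F fun k _ => ?_
    exact ((hu.meas hθ k).norm.pow 2).const_mul _
  have Dle : ∀ F, ∀ t ∈ Ioc 0 T, ‖D F t‖ ≤ hSq 2 (u t) := by
    intro F t ht
    rw [Real.norm_of_nonneg (Finset.sum_nonneg fun k _ => term_nonneg 2 (u t) k)]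
    exact Summable.sum_le_tsum F (fun k _ => term_nonneg 2 (u t) k)
      (hu.fin2 hθ (Ioc_subset_Icc_self ht))
  have Rint : ∀ F, IntegrableOn (fun t => |R F t|) (Ioc 0 T) := fun F =>
    Integrable.mono' (hInt.const_mul (Real.sqrt KK * Real.sqrt K)) (Rmeas F) (by
      filter_upwards [ae_restrict_mem measurableSet_Ioc] with t ht using Rbd F t ht)
  have Dint : ∀ F, IntegrableOn (D F) (Ioc 0 T) := fun F =>
    Integrable.mono' hInt (Dmeas F) (by
      filter_upwards [ae_restrict_mem measurableSet_Ioc] with t ht using Dle F t ht)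
  have Rint' : ∀ F, IntervalIntegrable (fun t => |R F t|) volume 0 T := fun F =>
    (intervalIntegrable_iff_integrableOn_Ioc_of_le hT.le).mpr (Rint F)
  have Dint' : ∀ F, IntervalIntegrable (D F) volume 0 T := fun F =>
    (intervalIntegrable_iff_integrableOn_Ioc_of_le hT.le).mpr (Dint F)
  have step : ∀ F, ν * (∫ t in (0 : ℝ)..T, D F t) ≤
      hSq 1 θ + T * (ν⁻¹ * hSq 0 f) + 2 * ∫ t in (0 : ℝ)..T, |R F t| := by
    intro F
    have key := intervalIntegral.sub_le_integral_of_hasDeriv_right_of_le (a := 0) (b := T)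
      (g := fun s => ∑ k ∈ F, lam k * ‖u s k‖ ^ 2)
      (g' := fun s => ∑ k ∈ F, lam k * (2 * inner ℝ (u s k)
        (f k - ((ν * lam k : ℝ) : ℂ) * u s k - Bc (u s) (u s) k)))
      (φ := fun s => (ν⁻¹ * hSq 0 f - ν * D F s) + 2 * |R F s|) hT.le
      (continuousOn_finsetSum F fun k _ =>
        continuousOn_const.mul ((hu.cont hθ k).norm.pow 2))
      (fun s hs => by
        refine HasDerivAt.hasDerivWithinAt ?_
        refine HasDerivAt.fun_sum fun k _ => ?_
        exact ((hu.deriv k s ⟨hs.1, hs.2.le⟩).norm_sq).const_mul (lam k))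
      (Iff.mpr (integrableOn_Icc_iff_integrableOn_Ioc (by finiteness))
        (((integrableOn_const (by simp) enorm_ne_top).sub ((Dint F).const_mul ν)).add
          ((Rint F).const_mul 2)))
      (fun s hs => by
        have h1 : ∑ k ∈ F, lam k * (2 * inner ℝ (u s k)
            (f k - ((ν * lam k : ℝ) : ℂ) * u s k - Bc (u s) (u s) k)) ≤
            ∑ k ∈ F, (ν⁻¹ * ‖f k‖ ^ 2 - ν * (lam k ^ 2 * ‖u s k‖ ^ 2) -
              2 * (lam k * inner ℝ (u s k) (Bc (u s) (u s) k))) :=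
          Finset.sum_le_sum fun k _ => inner_sub_le ν hν (lam k) _ _ _
        have h2 : ∑ k ∈ F, ‖f k‖ ^ 2 ≤ hSq 0 f := by
          have := Summable.sum_le_tsum F (fun k _ => term_nonneg 0 f k) hf0
          simpa [hSq] using this
        have h3 : D F s = ∑ k ∈ F, lam k ^ 2 * ‖u s k‖ ^ 2 := by
          simp only [hD, Real.rpow_two]
        rw [Finset.sum_sub_distrib, Finset.sum_sub_distrib, ← Finset.mul_sum, ← Finset.mul_sum,
          ← Finset.mul_sum, ← h3] at h1
        have h4 := neg_abs_le (R F s)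
        have h5 := mul_le_mul_of_nonneg_left h2 (inv_pos.mpr hν).le
        have h6 : R F s = ∑ k ∈ F, lam k * inner ℝ (u s k) (Bc (u s) (u s) k) := rfl
        rw [← h6] at h1
        linarith)
    have e1 : ∫ s in (0 : ℝ)..T, ((ν⁻¹ * hSq 0 f - ν * D F s) + 2 * |R F s|) =
        T * (ν⁻¹ * hSq 0 f) - ν * (∫ s in (0 : ℝ)..T, D F s) + 2 * ∫ s in (0 : ℝ)..T, |R F s| := by
      rw [intervalIntegral.integral_add (intervalIntegrable_const.sub ((Dint' F).const_mul ν))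
        ((Rint' F).const_mul 2), intervalIntegral.integral_sub intervalIntegrable_const
        ((Dint' F).const_mul ν), intervalIntegral.integral_const,
        intervalIntegral.integral_const_mul ν, intervalIntegral.integral_const_mul (2 : ℝ),
        sub_zero, smul_eq_mul]
    rw [e1] at key
    have h7 : 0 ≤ ∑ k ∈ F, lam k * ‖u T k‖ ^ 2 :=
      Finset.sum_nonneg fun k _ => mul_nonneg (lam_pos k).le (sq_nonneg _)
    have h8 : ∑ k ∈ F, lam k * ‖u 0 k‖ ^ 2 ≤ hSq 1 θ := by
      rw [hu.init]
      have := Summable.sum_le_tsum F (fun k _ => term_nonneg 1 θ k) (hθ.2.mono one_le_two)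
      simpa [hSq] using this
    linarith
  have lim1 : Filter.Tendsto (fun F => ∫ t in (0 : ℝ)..T, D F t) Filter.atTop
      (nhds (∫ t in (0 : ℝ)..T, hSq 2 (u t))) := by
    refine intervalIntegral.tendsto_integral_filter_of_dominated_convergence
      (fun t => hSq 2 (u t)) ?_ ?_ hInt' ?_
    · refine Filter.Eventually.of_forall fun F => ?_
      rw [uIoc_of_le hT.le]; exact Dmeas F
    · refine Filter.Eventually.of_forall fun F => Filter.Eventually.of_forall fun t ht => ?_
      rw [uIoc_of_le hT.le] at ht; exact Dle F t ht
    · refine Filter.Eventually.of_forall fun t ht => ?_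
      rw [uIoc_of_le hT.le] at ht
      exact Summable.hasSum (hu.fin2 hθ (Ioc_subset_Icc_self ht))
  have lim2 : Filter.Tendsto (fun F => ∫ t in (0 : ℝ)..T, |R F t|) Filter.atTop
      (nhds (∫ t in (0 : ℝ)..T, (0 : ℝ))) := by
    refine intervalIntegral.tendsto_integral_filter_of_dominated_convergence
      (fun t => Real.sqrt KK * Real.sqrt K * hSq 2 (u t)) ?_ ?_ (hInt'.const_mul _) ?_
    · refine Filter.Eventually.of_forall fun F => ?_
      rw [uIoc_of_le hT.le]; exact Rmeas F
    · refine Filter.Eventually.of_forall fun F => Filter.Eventually.of_forall fun t ht => ?_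
      rw [uIoc_of_le hT.le] at ht; exact Rbd F t ht
    · refine Filter.Eventually.of_forall fun t ht => ?_
      rw [uIoc_of_le hT.le] at ht
      have ht' := Ioc_subset_Icc_self ht
      have h1 : Filter.Tendsto (fun F => R F t) Filter.atTop (nhds 0) :=
        enstrophy_cancel (hu.fin2 hθ ht') (hu.real t ht')
      simpa using h1.abs
  rw [intervalIntegral.integral_zero] at lim2
  have := le_of_tendsto_of_tendsto' (lim1.const_mul ν) ((lim2.const_mul 2).const_add
    (hSq 1 θ + T * (ν⁻¹ * hSq 0 f))) step
  simpa using this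

end sol

/-! ### Stability estimate -/

lemma deriv_term_ge (ν l : ℝ) (hl : 0 < l) (a x y b c : ℂ) :
    -(2 * ν * ‖x - y‖ ^ 2) - 2 * (l⁻¹ * (‖x - y‖ * ‖b - c‖)) ≤
      l⁻¹ * (2 * inner ℝ (x - y)
        ((a - ((ν * l : ℝ) : ℂ) * x - b) - (a - ((ν * l : ℝ) : ℂ) * y - c))) := by
  have e : (a - ((ν * l : ℝ) : ℂ) * x - b) - (a - ((ν * l : ℝ) : ℂ) * y - c) =
      -((ν * l : ℝ) • (x - y)) - (b - c) := by
    rw [Complex.real_smul]; ring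
  rw [e, inner_sub_right, inner_neg_right, real_inner_smul_right, real_inner_self_eq_norm_sq]
  have h1 := real_inner_le_norm (x - y) (b - c)
  have h2 := mul_le_mul_of_nonneg_left h1 (inv_pos.mpr hl).le
  have h3 : l⁻¹ * (2 * (-(ν * l * ‖x - y‖ ^ 2) - inner ℝ (x - y) (b - c))) =
      -(2 * ν * ‖x - y‖ ^ 2) - 2 * (l⁻¹ * inner ℝ (x - y) (b - c)) := by
    field_simp
  rw [h3]
  linarith

lemma sum_zero_le {c : Coef} (hc : FinH 0 c) (F : Finset Freq) : ∑ k ∈ F, ‖c k‖ ^ 2 ≤ hSq 0 c := by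
  have := Summable.sum_le_tsum F (fun k _ => term_nonneg 0 c k) hc
  simpa [hSq] using this

lemma diff_ineq {a u v : Coef} (hu : FinH 2 u) (hv : FinH 2 v) {ν : ℝ} (hν : 0 < ν)
    (F : Finset Freq) :
    -((2 * ν + 1) * hSq 0 (u - v)) - 2 * KK * (hSq 2 u + hSq 2 v) *
        ∑ k ∈ F, (lam k)⁻¹ * ‖(u - v) k‖ ^ 2 ≤
      ∑ k ∈ F, (lam k)⁻¹ * (2 * inner ℝ (u k - v k)
        ((a k - ((ν * lam k : ℝ) : ℂ) * u k - Bc u u k) -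
          (a k - ((ν * lam k : ℝ) : ℂ) * v k - Bc v v k))) := by
  have h1 := Finset.sum_le_sum (s := F) fun k _ =>
    deriv_term_ge ν (lam k) (lam_pos k) (a k) (u k) (v k) (Bc u u k) (Bc v v k)
  refine le_trans ?_ h1
  rw [Finset.sum_sub_distrib, Finset.sum_neg_distrib, ← Finset.mul_sum, ← Finset.mul_sum]
  have h2 := sum_zero_le ((hu.sub hv).mono zero_le_two) F
  have h3 := est_A hu hv F
  simp only [Pi.sub_apply] at h2 h3 ⊢
  set y := ∑ k ∈ F, (lam k)⁻¹ * ‖u k - v k‖ ^ 2 with hy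
  have y0 : 0 ≤ y := Finset.sum_nonneg fun k _ =>
    mul_nonneg (inv_pos.mpr (lam_pos k)).le (sq_nonneg _)
  have h0 := hSq_nonneg 0 (u - v)
  have s1 := Real.sq_sqrt y0
  have s2 := Real.sq_sqrt h0
  have h4 := sq_nonneg (Real.sqrt (hSq 0 (u - v)) - (l1 u + l1 v) * Real.sqrt y)
  have h5 : (l1 u + l1 v) ^ 2 ≤ 2 * KK * (hSq 2 u + hSq 2 v) := by
    have := (l1_bound hu).2
    have := (l1_bound hv).2
    have := sq_nonneg (l1 u - l1 v)
    nlinarith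
  have h6 := mul_le_mul_of_nonneg_right h5 y0
  have h7 : (Real.sqrt (hSq 0 (u - v)) - (l1 u + l1 v) * Real.sqrt y) ^ 2 =
      hSq 0 (u - v) - 2 * ((l1 u + l1 v) * (Real.sqrt (hSq 0 (u - v)) * Real.sqrt y)) +
        (l1 u + l1 v) ^ 2 * y := by
    rw [sub_sq, mul_pow, s1, s2]; ring
  have h8 := mul_le_mul_of_nonneg_left h2 (by positivity : 0 ≤ 2 * ν)
  rw [h7] at h4
  linarith

lemma diff_integrable {ν T : ℝ} {f θ θ₀ : Coef} {u u₀ : ℝ → Coef} (hu : IsNSSol ν f T θ u)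
    (hu₀ : IsNSSol ν f T θ₀ u₀) (hθ : MemH 2 θ) (hθ₀ : MemH 2 θ₀) :
    IntegrableOn (fun t => hSq 0 (u t - u₀ t)) (Ioc 0 T) := by
  have fin : ∀ t ∈ Ioc 0 T, FinH 2 (u t - u₀ t) := fun t ht =>
    (hu.fin2 hθ (Ioc_subset_Icc_self ht)).sub (hu₀.fin2 hθ₀ (Ioc_subset_Icc_self ht))
  refine Integrable.mono' ((hu.memL2H2.2.const_mul 2).add (hu₀.memL2H2.2.const_mul 2)) ?_ ?_
  · refine aestronglyMeasurable_of_tendsto_ae (Filter.atTop : Filter (Finset Freq))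
      (f := fun F t => ∑ k ∈ F, lam k ^ (0 : ℝ) * ‖(u t - u₀ t) k‖ ^ 2) ?_ ?_
    · intro F
      refine Finset.aestronglyMeasurable_fun_sum F fun k _ => ?_
      exact (((hu.meas hθ k).sub (hu₀.meas hθ₀ k)).norm.pow 2).const_mul _
    · filter_upwards [ae_restrict_mem measurableSet_Ioc] with t ht
      exact Summable.hasSum ((fin t ht).mono zero_le_two)
  · filter_upwards [ae_restrict_mem measurableSet_Ioc] with t ht
    rw [Real.norm_of_nonneg (hSq_nonneg _ _)]
    exact (hSq_mono zero_le_two (fin t ht)).trans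
      (hSq_sub_le (hu.fin2 hθ (Ioc_subset_Icc_self ht)) (hu₀.fin2 hθ₀ (Ioc_subset_Icc_self ht)))

lemma stab_F {ν T B : ℝ} {f θ θ₀ : Coef} {u u₀ : ℝ → Coef} (hT : 0 < T) (hν : 0 < ν)
    (hf : MemH 1 f) (hu : IsNSSol ν f T θ u)
    (hu₀ : IsNSSol ν f T θ₀ u₀) (hθ : MemH 2 θ) (hθ₀ : MemH 2 θ₀)
    (hB : hN 2 θ + hN 2 θ₀ ≤ B) (F : Finset Freq) :
    ∑ k ∈ F, (lam k)⁻¹ * ‖(θ - θ₀) k‖ ^ 2 ≤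
      Real.exp (1 + 2 * KK * (2 * (ν⁻¹ * (B ^ 2 + T * (ν⁻¹ * hSq 0 f))))) *
        (T⁻¹ + (2 * ν + 1)) * ∫ t in (0 : ℝ)..T, hSq 0 (u t - u₀ t) := by
  have hInt := diff_integrable hu hu₀ hθ hθ₀
  have hInt' : IntervalIntegrable (fun t => hSq 0 (u t - u₀ t)) volume 0 T :=
    (intervalIntegrable_iff_integrableOn_Ioc_of_le hT.le).mpr hInt
  set I := ∫ t in (0 : ℝ)..T, hSq 0 (u t - u₀ t) with hI
  set G0 := 2 * KK * (2 * (ν⁻¹ * (B ^ 2 + T * (ν⁻¹ * hSq 0 f)))) with hG0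
  have I0 : 0 ≤ I := intervalIntegral.integral_nonneg hT.le fun t _ => hSq_nonneg _ _
  have one : ∀ {θ' : Coef} {u' : ℝ → Coef}, IsNSSol ν f T θ' u' → MemH 2 θ' → hN 2 θ' ≤ B →
      ∫ t in (0 : ℝ)..T, hSq 2 (u' t) ≤ ν⁻¹ * (B ^ 2 + T * (ν⁻¹ * hSq 0 f)) := by
    intro θ' u' h' hm hb
    have h1 := h'.enstrophy hT hν hf hm
    have h2 : hSq 1 θ' ≤ B ^ 2 := by
      refine (hSq_mono one_le_two hm.2).trans ?_
      rw [← hN_sq]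
      exact pow_le_pow_left₀ (Real.sqrt_nonneg _) hb 2
    rw [← div_eq_inv_mul, le_div_iff₀' hν]
    linarith
  have n1 : 0 ≤ hN 2 θ := Real.sqrt_nonneg _
  have n2 : 0 ≤ hN 2 θ₀ := Real.sqrt_nonneg _
  have ii : ∀ {θ' : Coef} {u' : ℝ → Coef}, IsNSSol ν f T θ' u' →
      IntervalIntegrable (fun t => hSq 2 (u' t)) volume 0 T := fun h' =>
    (intervalIntegrable_iff_integrableOn_Ioc_of_le hT.le).mpr h'.memL2H2.2
  have hG : ∫ t in (0 : ℝ)..T, 2 * KK * (hSq 2 (u t) + hSq 2 (u₀ t)) ≤ G0 := by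
    rw [intervalIntegral.integral_const_mul, intervalIntegral.integral_add (ii hu) (ii hu₀)]
    refine mul_le_mul_of_nonneg_left ?_ (mul_nonneg zero_le_two KK_nonneg)
    have h1 := one hu hθ (by linarith)
    have h2 := one hu₀ hθ₀ (by linarith)
    linarith
  have fin : ∀ t ∈ Icc 0 T, FinH 2 (u t - u₀ t) := fun t ht =>
    (hu.fin2 hθ ht).sub (hu₀.fin2 hθ₀ ht)
  set y : ℝ → ℝ := fun t => ∑ k ∈ F, (lam k)⁻¹ * ‖(u t - u₀ t) k‖ ^ 2 with hy
  have y0 : ∀ t, 0 ≤ y t := fun t => Finset.sum_nonneg fun k _ =>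
    mul_nonneg (inv_pos.mpr (lam_pos k)).le (sq_nonneg _)
  have ycont : ContinuousOn y (Icc 0 T) := continuousOn_finsetSum F fun k _ =>
    continuousOn_const.mul ((((hu.cont hθ k).sub (hu₀.cont hθ₀ k))).norm.pow 2)
  have yle : ∀ t ∈ Icc 0 T, y t ≤ hSq 0 (u t - u₀ t) := by
    intro t ht
    refine le_trans (Finset.sum_le_sum fun k _ => ?_)
      (sum_zero_le ((fin t ht).mono zero_le_two) F)
    exact mul_le_of_le_one_left (sq_nonneg _) (inv_le_one_of_one_le₀ (one_le_lam k))
  have main : ∀ ε > 0, ∀ t ∈ Icc 0 T, y 0 ≤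
      Real.exp (1 + G0) * (hSq 0 (u t - u₀ t) + ((2 * ν + 1) * I + ε)) := by
    intro ε hε t ht
    have H0 : 0 < (2 * ν + 1) * I + ε := by positivity
    have h1 := log_gronwall (C := 2 * ν + 1) (H := (2 * ν + 1) * I + ε) (y := y)
      (h := fun t => hSq 0 (u t - u₀ t)) (g := fun t => 2 * KK * (hSq 2 (u t) + hSq 2 (u₀ t)))
      (y' := fun t => ∑ k ∈ F, (lam k)⁻¹ * (2 * inner ℝ (u t k - u₀ t k)
        ((f k - ((ν * lam k : ℝ) : ℂ) * u t k - Bc (u t) (u t) k) -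
          (f k - ((ν * lam k : ℝ) : ℂ) * u₀ t k - Bc (u₀ t) (u₀ t) k)))) ycont
      (fun s hs => by
        refine HasDerivAt.fun_sum fun k _ => ?_
        exact (((hu.deriv k s ⟨hs.1, hs.2.le⟩).sub
          (hu₀.deriv k s ⟨hs.1, hs.2.le⟩)).norm_sq).const_mul (lam k)⁻¹)
      y0 (fun s => hSq_nonneg _ _)
      (fun s => mul_nonneg (mul_nonneg zero_le_two KK_nonneg)
        (add_nonneg (hSq_nonneg _ _) (hSq_nonneg _ _))) hInt
      ((hu.memL2H2.2.add hu₀.memL2H2.2).const_mul (2 * KK)) (by positivity) H0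
      (fun s hs => diff_ineq (hu.fin2 hθ ⟨hs.1.le, hs.2.le⟩) (hu₀.fin2 hθ₀ ⟨hs.1.le, hs.2.le⟩)
        hν F) (by rw [← hI]; linarith) ht
    have h2 : Real.exp (1 + ∫ t in (0 : ℝ)..T, 2 * KK * (hSq 2 (u t) + hSq 2 (u₀ t))) ≤
        Real.exp (1 + G0) := Real.exp_le_exp.mpr (by linarith)
    have h3 := mul_le_mul h2 (add_le_add_left (yle t ht) ((2 * ν + 1) * I + ε))
      (add_nonneg (y0 t) H0.le) (Real.exp_pos _).le
    linarith
  have fin2 : ∀ ε > 0, y 0 ≤ Real.exp (1 + G0) * (T⁻¹ + (2 * ν + 1)) * I +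
      Real.exp (1 + G0) * ε := by
    intro ε hε
    have h1 := intervalIntegral.integral_mono_on hT.le
      (intervalIntegrable_const (c := y 0) (μ := volume))
      ((hInt'.add intervalIntegrable_const).const_mul (Real.exp (1 + G0)))
      (fun t ht => main ε hε t ht)
    rw [intervalIntegral.integral_const_mul, intervalIntegral.integral_add hInt'
      intervalIntegrable_const, intervalIntegral.integral_const, intervalIntegral.integral_const,
      sub_zero, smul_eq_mul, smul_eq_mul, ← hI, ← le_div_iff₀' hT] at h1
    refine h1.trans (le_of_eq ?_)
    field_simp
    ring
  have e0 : ∑ k ∈ F, (lam k)⁻¹ * ‖(θ - θ₀) k‖ ^ 2 = y 0 := by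
    rw [hy]; simp only [hu.init, hu₀.init]
  rw [e0]
  refine le_of_forall_pos_le_add fun δ hδ => ?_
  have h := fin2 (δ / Real.exp (1 + G0)) (div_pos hδ (Real.exp_pos _))
  rwa [mul_div_cancel₀ _ (Real.exp_pos _).ne'] at h

/-- Proposition `PropStabForward`. Stability
(inverse-continuity) estimate for the Navier–Stokes forward map: for
`f ∈ Ḣ¹_⋄`, `T>0`, `ν>0`, `B>0` there is `C = C(ν,T,‖f‖_{Ḣ¹},B) > 0` such
that for all `θ, θ₀ ∈ Ḣ²_⋄` with `‖θ‖_{Ḣ²} + ‖θ₀‖_{Ḣ²} ≤ B`,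
`‖θ − θ₀‖²_{Ḣ^{−1}} ≤ C ∫₀ᵀ ‖u_θ(t) − u_{θ₀}(t)‖²_{L²} dt`. -/
theorem statement4 (T ν : ℝ) (hT : 0 < T) (hν : 0 < ν)
    (f : Coef) (hf : MemH 1 f) (B : ℝ) (hB : 0 < B) :
    ∃ C : ℝ, 0 < C ∧
      ∀ (θ θ₀ : Coef) (u u₀ : ℝ → Coef),
        MemH 2 θ → MemH 2 θ₀ → hN 2 θ + hN 2 θ₀ ≤ B →
        IsNSSol ν f T θ u → IsNSSol ν f T θ₀ u₀ →
          hSq (-1) (θ - θ₀) ≤ C * ∫ t in (0:ℝ)..T, hSq 0 (u t - u₀ t) := by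
  refine ⟨Real.exp (1 + 2 * KK * (2 * (ν⁻¹ * (B ^ 2 + T * (ν⁻¹ * hSq 0 f))))) *
    (T⁻¹ + (2 * ν + 1)), by positivity, fun θ θ₀ u u₀ hθ hθ₀ hBB hu hu₀ => ?_⟩
  refine Real.tsum_le_of_sum_le (fun k => term_nonneg (-1) (θ - θ₀) k) fun F => ?_
  simp only [Real.rpow_neg_one]
  exact stab_F hT hν hf hu hu₀ hθ hθ₀ hBB F

end NS2D
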